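/- arXiv:1302.0517 — 2 statements merged into one kernel-verified Lean document; each statement's English description precedes it below -/
import Mathlib

section
/- For every integer n > 2^8 = 256, every positive integer N, and every n-linear form U : (ℝ^N)^n → ℝ, one has (∑_{i₁,…,iₙ=1}^N |U(e_{i₁},…,e_{iₙ})|^{2n/(n+1)})^{(n+1)/(2n)} ≤ 1.303787 · (n-1)^{0.526322} · ‖U‖. -/
open Real

/-- The Bohnenblust--Hille quantity of an `n`-linear form on `ℓ_∞^N` over `ℝ`:
`(∑_{i₁,…,iₙ} |U(e_{i₁},…,e_{iₙ})|^{2n/(n+1)})^{(n+1)/(2n)}`. -/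
noncomputable def BHreal (n N : ℕ)
    (U : ContinuousMultilinearMap ℝ (fun _ : Fin n => (Fin N → ℝ)) ℝ) : ℝ :=
  (∑ i : Fin n → Fin N,
      |U (fun k => Pi.single (i k) (1 : ℝ))| ^ ((2 * n : ℝ) / (n + 1)))
    ^ ((n + 1 : ℝ) / (2 * n))

/-!
Let `κ = 2√(2/π)` be the third absolute moment of the standard Gaussian. The constant of the
Bohnenblust–Hille inequality grows by a factor `κ ^ (1 / n)` from `n`-linear to `(n+1)`-linear
forms. Indeed, plugging random signs into one variable of an `(n+1)`-linear form `U` yields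
`n`-linear forms of norm at most `‖U‖`; averaging their inequalities over the signs and applying
Khintchine's inequality bounds, for each choice of that variable, a mixed `(ℓ_p, ℓ_2)` norm of the
coefficients of `U`, with `p = 2n/(n+1)`. Interpolating between these `n + 1` mixed norms, by Hölder
and the Loomis–Whitney inequality, gives the required `ℓ_q` norm with `q = 2(n+1)/(n+2)`.

Starting from constant `1` in degree one, degree `n` is reached with the constant
`κ ^ (1 + 1/2 + ⋯ + 1/(n-1))`, which is of order `n ^ log κ`, and `log κ < 0.5263`.

Khintchine's inequality with constant `κ` comes from comparing a Rademacher sum with a Gaussian of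
the same variance: replacing the signs one at a time can only increase the third absolute moment,
and Lyapunov's inequality between the exponents `p < 2 < 3` transfers this to a lower bound on the
`p`-th moment.
-/

section

open Finset MeasureTheory ProbabilityTheory
open scoped NNReal ENNReal BigOperators

/-! ### Loomis–Whitney and interpolation of mixed norms -/

theorem sum_prod_rpow_le {α ι : Type*} [Fintype α] [Fintype ι] (f : ι → α → ℝ≥0) {w : ι → ℝ}
    (hw : ∀ j, 0 ≤ w j) (hsum : ∑ j, w j = 1) :
    ∑ x, ∏ j, f j x ^ w j ≤ ∏ j, (∑ x, f j x) ^ w j := by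
  let _ : MeasurableSpace α := ⊤
  have h := ENNReal.lintegral_prod_norm_pow_le (μ := Measure.count) univ
    (f := fun j x ↦ (f j x : ℝ≥0∞)) (fun j _ ↦ (measurable_of_finite _).aemeasurable) hsum
    (fun j _ ↦ hw j)
  simp only [lintegral_count, tsum_fintype, ← ENNReal.coe_rpow_of_nonneg _ (hw _)] at h
  simp only [← ENNReal.ofNNReal_finsetSum, ← ENNReal.coe_rpow_of_nonneg _ (hw _)] at h
  exact_mod_cast h

theorem sum_rpow_mul_rpow_le {α : Type*} [Fintype α] (f g : α → ℝ≥0) {s t : ℝ}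
    (hs : 0 ≤ s) (ht : 0 ≤ t) (hst : s + t = 1) :
    ∑ x, f x ^ s * g x ^ t ≤ (∑ x, f x) ^ s * (∑ x, g x) ^ t := by
  simpa [Fin.prod_univ_two] using sum_prod_rpow_le ![f, g] (w := ![s, t])
    (by simp [Fin.forall_fin_two, hs, ht]) (by simpa [Fin.sum_univ_two] using hst)

theorem expect_rpow_mul_rpow_le {α : Type*} [Fintype α] (f g : α → ℝ≥0) {s t : ℝ}
    (hs : 0 ≤ s) (ht : 0 ≤ t) (hst : s + t = 1) :
    𝔼 x, f x ^ s * g x ^ t ≤ (𝔼 x, f x) ^ s * (𝔼 x, g x) ^ t := by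
  have hcard : (Fintype.card α : ℝ≥0) = Fintype.card α ^ s * Fintype.card α ^ t := by
    rw [← NNReal.rpow_add_of_nonneg _ hs ht, hst, NNReal.rpow_one]
  simp only [Fintype.expect_eq_sum_div_card, NNReal.div_rpow]
  rw [div_mul_div_comm, ← hcard]
  gcongr
  exact sum_rpow_mul_rpow_le f g hs ht hst

theorem expect_rpow_rpow_le {α : Type*} [Fintype α] (f : α → ℝ≥0) {p q r : ℝ}
    (hpq : p < q) (hqr : q < r) (hq : q ≠ 0) :
    (𝔼 x, f x ^ q) ^ (r - p) ≤ (𝔼 x, f x ^ p) ^ (r - q) * (𝔼 x, f x ^ r) ^ (q - p) := by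
  have hrp : 0 < r - p := by linarith
  have hfq (x) : (f x ^ p) ^ ((r - q) / (r - p)) * (f x ^ r) ^ ((q - p) / (r - p)) = f x ^ q := by
    have hexp : p * ((r - q) / (r - p)) + r * ((q - p) / (r - p)) = q := by field_simp; ring
    rw [← NNReal.rpow_mul, ← NNReal.rpow_mul, ← NNReal.rpow_add' (by rwa [hexp]), hexp]
  have h := expect_rpow_mul_rpow_le (fun x ↦ f x ^ p) (fun x ↦ f x ^ r)
    (s := (r - q) / (r - p)) (t := (q - p) / (r - p))
    (div_nonneg (by linarith) hrp.le) (div_nonneg (by linarith) hrp.le) (by field_simp; ring)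
  simp only [hfq] at h
  calc (𝔼 x, f x ^ q) ^ (r - p) ≤ _ := NNReal.rpow_le_rpow h hrp.le
    _ = _ := by
      rw [NNReal.mul_rpow, ← NNReal.rpow_mul, ← NNReal.rpow_mul, div_mul_cancel₀ _ hrp.ne',
        div_mul_cancel₀ _ hrp.ne']

theorem sum_fin_eq_sum_insertNth {α M : Type*} [Fintype α] [AddCommMonoid M] {n : ℕ}
    (j : Fin (n + 1)) (f : (Fin (n + 1) → α) → M) :
    ∑ i, f i = ∑ y : Fin n → α, ∑ x, f (j.insertNth x y) := by
  rw [← (Fin.insertNthEquiv (fun _ ↦ α) j).sum_comp, Fintype.sum_prod_type_right]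
  rfl

theorem sum_fin_eq_sum_cons {α M : Type*} [Fintype α] [AddCommMonoid M] {n : ℕ}
    (f : (Fin (n + 1) → α) → M) :
    ∑ i, f i = ∑ y : Fin n → α, ∑ x, f (Fin.cons x y) := by
  simpa using sum_fin_eq_sum_insertNth 0 f

theorem removeNth_succ_cons {α : Type*} {n : ℕ} (j : Fin (n + 1)) (x : α) (y : Fin (n + 1) → α) :
    j.succ.removeNth (Fin.cons x y : Fin (n + 2) → α) = Fin.cons x (j.removeNth y) := by
  funext l
  cases l using Fin.cases <;> simp [Fin.removeNth]

theorem sum_prod_removeNth_rpow_le {α : Type*} [Fintype α] {n : ℕ} (hn : 1 ≤ n)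
    (F : Fin (n + 1) → (Fin n → α) → ℝ≥0) :
    ∑ i : Fin (n + 1) → α, ∏ j, F j (j.removeNth i) ^ (1 / n : ℝ) ≤
      ∏ j, (∑ y, F j y) ^ (1 / n : ℝ) := by
  induction n, hn using Nat.le_induction with
  | base =>
    refine le_of_eq ?_
    simp only [Fin.prod_univ_succ, sum_fin_eq_sum_cons, removeNth_succ_cons, Fin.removeNth_zero,
      Fin.tail_cons, Nat.cast_one, div_one, NNReal.rpow_one, ← mul_sum, ← sum_mul,
      Fin.prod_univ_zero, mul_one, Fintype.sum_unique]
  | succ n hn ih =>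
    have : (0 : ℝ) < n := by exact_mod_cast hn
    set e : ℝ := 1 / (n + 1 : ℕ) with he
    have he₀ : 0 ≤ e := by positivity
    have hexp : 1 / n * (n * e) = e := by field_simp
    let H (j : Fin (n + 1)) (x : α) (y : Fin n → α) : ℝ≥0 := F j.succ (Fin.cons x y)
    let G (j : Fin (n + 1)) (y : Fin n → α) : ℝ≥0 := ∑ x, H j x y
    have hfiber (y : Fin (n + 1) → α) :
        ∑ x, ∏ j, H j x (j.removeNth y) ^ e ≤ ∏ j, G j (j.removeNth y) ^ e :=
      sum_prod_rpow_le (fun j x ↦ H j x (j.removeNth y)) (fun _ ↦ he₀) (by simp [he]; field_simp)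
    let P (y : Fin (n + 1) → α) : ℝ≥0 := ∏ j, G j (j.removeNth y) ^ (1 / n : ℝ)
    have hP (y) : ∏ j, G j (j.removeNth y) ^ e = P y ^ (n * e) := by
      simp only [P, ← NNReal.finsetProd_rpow, ← NNReal.rpow_mul, hexp]
    calc ∑ i : Fin (n + 2) → α, ∏ j, F j (j.removeNth i) ^ e
      _ = ∑ y, F 0 y ^ e * ∑ x, ∏ j, H j x (j.removeNth y) ^ e := by
        simp only [sum_fin_eq_sum_cons (n := n + 1), mul_sum]
        refine sum_congr rfl fun y _ ↦ sum_congr rfl fun x _ ↦ ?_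
        rw [Fin.prod_univ_succ]
        simp only [Fin.removeNth_zero, Fin.tail_cons, removeNth_succ_cons, H]
      _ ≤ ∑ y, F 0 y ^ e * P y ^ (n * e) := by
        refine sum_le_sum fun y _ ↦ mul_le_mul_right ((hfiber y).trans_eq (hP y)) _
      _ ≤ (∑ y, F 0 y) ^ e * (∑ y, P y) ^ (n * e) :=
        sum_rpow_mul_rpow_le _ _ he₀ (by positivity) (by
          simp only [he]; push_cast; field_simp; ring)
      _ ≤ (∑ y, F 0 y) ^ e * (∏ j, (∑ y, G j y) ^ (1 / n : ℝ)) ^ (n * e) := by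
        gcongr
        exact ih G
      _ = ∏ j, (∑ y, F j y) ^ e := by
        have hG (j) : ∑ y, G j y = ∑ y, F j.succ y := (sum_fin_eq_sum_cons (F j.succ)).symm
        simp only [← NNReal.finsetProd_rpow, ← NNReal.rpow_mul, hexp, hG]
        exact (Fin.prod_univ_succ fun j ↦ (∑ y, F j y) ^ e).symm

theorem rpow_eq_prod_rpow_mul_prod_rpow {n : ℕ} (hn : n ≠ 0) {a : ℝ≥0} {S : Fin (n + 1) → ℝ≥0}
    (hS : a ≠ 0 → ∀ j, S j ≠ 0) :
    a ^ (2 * (n + 1) / (n + 2) : ℝ) =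
      (∏ j, (S j ^ (n / (n + 1) : ℝ)) ^ (1 / n : ℝ)) ^ (1 / (n + 2) : ℝ) *
        ∏ j, (a ^ 2 * S j ^ (n / (n + 1) - 1 : ℝ)) ^ (1 / (n + 2) : ℝ) := by
  have hw : (1 / (n + 2) : ℝ) ≠ 0 := by positivity
  rcases eq_or_ne a 0 with rfl | ha
  · rw [NNReal.zero_rpow (by positivity)]
    simp only [zero_pow two_ne_zero, zero_mul, NNReal.zero_rpow hw, prod_const, card_fin,
      zero_pow n.succ_ne_zero, mul_zero]
  have hcancel (j) :
      (S j ^ (n / (n + 1) : ℝ)) ^ (1 / n : ℝ) * (a ^ 2 * S j ^ (n / (n + 1) - 1 : ℝ)) = a ^ 2 := by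
    have hexp : (n / (n + 1) : ℝ) * (1 / n) + (n / (n + 1) - 1) = 0 := by field_simp; ring
    rw [mul_left_comm, ← NNReal.rpow_mul, ← NNReal.rpow_add (hS ha j), hexp, NNReal.rpow_zero,
      mul_one]
  rw [NNReal.finsetProd_rpow univ fun j ↦ _ * _, ← NNReal.mul_rpow, ← prod_mul_distrib]
  simp only [hcancel]
  rw [prod_const, card_fin, ← pow_mul, ← NNReal.rpow_natCast, ← NNReal.rpow_mul]
  push_cast
  ring_nf

theorem sum_rpow_le_prod_sum_sum_sq {α : Type*} [Fintype α] {n : ℕ} (hn : 1 ≤ n)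
    (a : (Fin (n + 1) → α) → ℝ≥0) :
    ∑ i, a i ^ (2 * (n + 1) / (n + 2) : ℝ) ≤
      ∏ j : Fin (n + 1), (∑ y : Fin n → α, (∑ x, a (j.insertNth x y) ^ 2) ^ (n / (n + 1) : ℝ)) ^
        ((n + 1) / (n * (n + 2)) : ℝ) := by
  have hn₀ : (n : ℝ) ≠ 0 := by exact_mod_cast Nat.one_le_iff_ne_zero.1 hn
  let S (j : Fin (n + 1)) (y : Fin n → α) : ℝ≥0 := ∑ x, a (j.insertNth x y) ^ 2
  let F (j : Fin (n + 1)) (y : Fin n → α) : ℝ≥0 := S j y ^ (n / (n + 1) : ℝ)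
  let f : Option (Fin (n + 1)) → (Fin (n + 1) → α) → ℝ≥0
    | none, i => ∏ j, F j (j.removeNth i) ^ (1 / n : ℝ)
    | some j, i => a i ^ 2 * S j (j.removeNth i) ^ (n / (n + 1) - 1 : ℝ)
  have hS (i) (hi : a i ≠ 0) (j : Fin (n + 1)) : S j (j.removeNth i) ≠ 0 := fun h ↦
    hi (by simpa using sum_eq_zero_iff.1 h (i j) (mem_univ _))
  have hpt (i) : a i ^ (2 * (n + 1) / (n + 2) : ℝ) = ∏ o, f o i ^ (1 / (n + 2) : ℝ) := by
    rw [Fintype.prod_option]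
    exact rpow_eq_prod_rpow_mul_prod_rpow (by lia) (hS i)
  have hsome (j) : ∑ i, f (some j) i = ∑ y, F j y := by
    rw [sum_fin_eq_sum_insertNth j]
    refine sum_congr rfl fun y _ ↦ ?_
    simp only [f, Fin.removeNth_insertNth, ← sum_mul]
    rw [← NNReal.rpow_one_add' (by rw [add_sub_cancel]; positivity), add_sub_cancel]
  calc ∑ i, a i ^ (2 * (n + 1) / (n + 2) : ℝ)
    _ = ∑ i, ∏ o, f o i ^ (1 / (n + 2) : ℝ) := by simp only [hpt]
    _ ≤ ∏ o, (∑ i, f o i) ^ (1 / (n + 2) : ℝ) :=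
      sum_prod_rpow_le f (fun _ ↦ by positivity) (by simp; field_simp; ring)
    _ ≤ (∏ j, (∑ y, F j y) ^ (1 / n : ℝ)) ^ (1 / (n + 2) : ℝ) *
        ∏ j, (∑ y, F j y) ^ (1 / (n + 2) : ℝ) := by
      rw [Fintype.prod_option]
      simp only [hsome]
      gcongr
      exact sum_prod_removeNth_rpow_le hn F
    _ = ∏ j, (∑ y, F j y) ^ ((n + 1) / (n * (n + 2)) : ℝ) := by
      rw [← NNReal.finsetProd_rpow, ← prod_mul_distrib]
      refine prod_congr rfl fun j _ ↦ ?_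
      rw [← NNReal.rpow_mul, ← NNReal.rpow_add_of_nonneg _ (by positivity) (by positivity)]
      congr 1
      field_simp
      ring
/-! ### Third moments: one sign against a Gaussian of the same variance -/

theorem abs_add_pow_three_add_abs_sub_pow_three (w z : ℝ) :
    |w + z| ^ 3 + |w - z| ^ 3 = 2 * (|w| ^ 3 + 3 * |w| * z ^ 2 + max (|z| - |w|) 0 ^ 3) := by
  wlog hw : 0 ≤ w generalizing w
  · have h := this (-w) (by linarith)
    rw [abs_neg] at h
    rw [← h, ← abs_neg (w + z), ← abs_neg (w - z), neg_add', sub_eq_add_neg, neg_sub', add_comm]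
    ring_nf
  wlog hz : 0 ≤ z generalizing z
  · have h := this (-z) (by linarith)
    rwa [abs_neg, neg_sq, sub_neg_eq_add, ← sub_eq_add_neg, add_comm] at h
  rw [abs_of_nonneg hw, abs_of_nonneg hz, abs_of_nonneg (add_nonneg hw hz)]
  rcases le_total w z with h | h
  · rw [abs_of_nonpos (by linarith), max_eq_left (by linarith)]
    ring
  · rw [abs_of_nonneg (by linarith), max_eq_right (by linarith)]
    ring

-- As a function of `t = Z ^ 2`, `max (√t - W) 0 ^ 3` is convex; `k` is the slope of a supporting
-- line at `t = A ^ 2`.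
theorem exists_max_sub_pow_three_add_mul_le {W : ℝ} (hW : 0 ≤ W) (A : ℝ) :
    ∃ k, ∀ Z, 0 ≤ Z → max (A - W) 0 ^ 3 + k * (Z ^ 2 - A ^ 2) ≤ max (Z - W) 0 ^ 3 := by
  rcases le_or_gt A W with hA | hA
  · refine ⟨0, fun Z _ ↦ ?_⟩
    rw [max_eq_right (sub_nonpos.2 hA), zero_mul, add_zero, zero_pow three_ne_zero]
    positivity
  have hA₀ : 0 < A := hW.trans_lt hA
  refine ⟨3 * (A - W) ^ 2 / (2 * A), fun Z hZ ↦ ?_⟩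
  rw [max_eq_left (sub_pos.2 hA).le, div_mul_eq_mul_div, ← le_sub_iff_add_le',
    div_le_iff₀ (by positivity)]
  rcases le_total Z W with h | h
  · rw [max_eq_right (sub_nonpos.2 h)]
    nlinarith [mul_nonneg (sq_nonneg (A - W)) (mul_nonneg (sub_nonneg.2 h) (add_nonneg hZ hW)),
      mul_nonneg (sq_nonneg (A - W)) (mul_nonneg (sub_pos.2 hA).le (by positivity : 0 ≤ A + 3 * W))]
  · rw [max_eq_left (sub_nonneg.2 h), ← sub_nonneg]
    have hfactor : ((Z - W) ^ 3 - (A - W) ^ 3) * (2 * A) - 3 * (A - W) ^ 2 * (Z ^ 2 - A ^ 2) =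
        (Z - A) ^ 2 * ((A - W) * (2 * (Z - W) + (A - W)) + 2 * W * ((Z - W) + 2 * (A - W))) := by
      ring
    rw [hfactor]
    have := sub_nonneg.2 h
    have := sub_pos.2 hA
    positivity

theorem integrable_abs_add_pow_three {μ : Measure ℝ} [IsFiniteMeasure μ] (hμ : MemLp id 3 μ)
    (w : ℝ) : Integrable (fun z ↦ |w + z| ^ 3) μ := by
  simpa using ((memLp_const w).add hμ).integrable_norm_pow three_ne_zero

theorem abs_add_pow_three_add_abs_sub_pow_three_le_integral {μ : Measure ℝ}
    [IsProbabilityMeasure μ] [μ.IsNegInvariant] (hμ : MemLp id 3 μ) {a : ℝ}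
    (ha : ∫ z, z ^ 2 ∂μ = a ^ 2) (w : ℝ) :
    |w + a| ^ 3 + |w - a| ^ 3 ≤ 2 * ∫ z, |w + z| ^ 3 ∂μ := by
  obtain ⟨k, hk⟩ := exists_max_sub_pow_three_add_mul_le (abs_nonneg w) |a|
  have htangent (z : ℝ) : |w + a| ^ 3 + |w - a| ^ 3 + (6 * |w| + 2 * k) * (z ^ 2 - a ^ 2) ≤
      |w + z| ^ 3 + |w - z| ^ 3 := by
    have h := hk |z| (abs_nonneg z)
    simp only [sq_abs] at h
    simp only [abs_add_pow_three_add_abs_sub_pow_three]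
    linarith
  have hadd := integrable_abs_add_pow_three hμ w
  have hsub : Integrable (fun z ↦ |w - z| ^ 3) μ := by
    simpa only [sub_eq_add_neg] using hadd.comp_neg
  have hsq : Integrable (fun z : ℝ ↦ z ^ 2) μ :=
    (hμ.mono_exponent (by norm_num : (2 : ℝ≥0∞) ≤ 3)).integrable_sq
  have hdiff : Integrable (fun z ↦ (6 * |w| + 2 * k) * (z ^ 2 - a ^ 2)) μ :=
    (hsq.sub (integrable_const _)).const_mul _
  calc |w + a| ^ 3 + |w - a| ^ 3
    _ = ∫ z, (|w + a| ^ 3 + |w - a| ^ 3 + (6 * |w| + 2 * k) * (z ^ 2 - a ^ 2)) ∂μ := by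
      rw [integral_add (integrable_const _) hdiff, integral_const_mul,
        integral_sub hsq (integrable_const _), ha]
      simp
    _ ≤ ∫ z, (|w + z| ^ 3 + |w - z| ^ 3) ∂μ :=
      integral_mono ((integrable_const _).add hdiff) (hadd.add hsub) htangent
    _ = 2 * ∫ z, |w + z| ^ 3 ∂μ := by
      rw [integral_add hadd hsub, ← integral_neg_eq_self (fun z ↦ |w - z| ^ 3) μ, two_mul]
      simp only [sub_neg_eq_add]

instance isNegInvariant_gaussianReal (v : ℝ≥0) : (gaussianReal 0 v).IsNegInvariant :=
  ⟨by simpa [Measure.neg] using gaussianReal_map_neg (μ := 0) (v := v)⟩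

theorem integral_sq_gaussianReal (v : ℝ≥0) : ∫ z, z ^ 2 ∂gaussianReal 0 v = v := by
  rw [← variance_fun_id_gaussianReal (μ := 0), variance_eq_integral (by fun_prop)]
  simp

theorem abs_add_pow_three_add_abs_sub_pow_three_le_integral_gaussianReal (a w : ℝ) :
    |w + a| ^ 3 + |w - a| ^ 3 ≤ 2 * ∫ z, |w + z| ^ 3 ∂gaussianReal 0 (‖a‖₊ ^ 2) :=
  abs_add_pow_three_add_abs_sub_pow_three_le_integral
    (memLp_id_gaussianReal 3) (by simp [integral_sq_gaussianReal]) w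

theorem integral_abs_add_pow_three_gaussianReal_add_le (v : ℝ≥0) (a w : ℝ) :
    ∫ z, |w + a + z| ^ 3 ∂gaussianReal 0 v + ∫ z, |w - a + z| ^ 3 ∂gaussianReal 0 v ≤
      2 * ∫ z, |w + z| ^ 3 ∂gaussianReal 0 (v + ‖a‖₊ ^ 2) := by
  have hint {v : ℝ≥0} (w : ℝ) : Integrable (fun z ↦ |w + z| ^ 3) (gaussianReal 0 v) :=
    integrable_abs_add_pow_three (memLp_id_gaussianReal 3) w
  have hconv : gaussianReal 0 (v + ‖a‖₊ ^ 2) = gaussianReal 0 v ∗ gaussianReal 0 (‖a‖₊ ^ 2) := by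
    rw [gaussianReal_conv_gaussianReal, add_zero]
  have hprod : Integrable (fun z ↦ |w + z| ^ 3) (gaussianReal 0 v ∗ gaussianReal 0 (‖a‖₊ ^ 2)) :=
    hconv ▸ hint w
  have houter : Integrable (fun y ↦ ∫ z, |w + (y + z)| ^ 3 ∂gaussianReal 0 (‖a‖₊ ^ 2))
      (gaussianReal 0 v) := by
    simpa using ((integrable_conv_iff hprod.1).1 hprod).2
  rw [← integral_add (hint _) (hint _), hconv, integral_conv hprod, ← integral_const_mul]
  refine integral_mono ((hint _).add (hint _)) (houter.const_mul 2) fun y ↦ ?_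
  simpa only [add_right_comm w, sub_add_eq_add_sub, add_assoc] using
    abs_add_pow_three_add_abs_sub_pow_three_le_integral_gaussianReal a (w + y)

theorem integral_abs_rpow_gaussianReal {v : ℝ≥0} (hv : v ≠ 0) {p : ℝ} (hp : -1 < p) :
    ∫ y, |y| ^ p ∂gaussianReal 0 v = (2 * v) ^ (p / 2) * Gamma ((p + 1) / 2) / √π := by
  have hv₀ : (0 : ℝ) < 2 * v := by positivity
  have hdensity (y : ℝ) : gaussianPDFReal 0 v y • |y| ^ p =
      (√(2 * π * v))⁻¹ * (|y| ^ p * exp (-(2 * v : ℝ)⁻¹ * |y| ^ (2 : ℝ))) := by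
    rw [gaussianPDFReal, rpow_two, sq_abs, sub_zero, smul_eq_mul, neg_div, div_eq_inv_mul,
      neg_mul]
    ring
  have hsqrt : √(2 * π * v) = (2 * v) ^ (1 / 2 : ℝ) * √π := by
    rw [mul_right_comm, sqrt_mul hv₀.le, sqrt_eq_rpow]
  have hpow : ((2 * v : ℝ)⁻¹) ^ (-(p + 1) / 2) = (2 * v) ^ (p / 2) * (2 * v) ^ (1 / 2 : ℝ) := by
    rw [inv_rpow hv₀.le, ← rpow_neg hv₀.le, ← rpow_add hv₀]
    ring_nf
  rw [integral_gaussianReal_eq_integral_smul hv]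
  simp only [hdensity]
  rw [integral_const_mul,
    integral_comp_abs (f := fun t ↦ t ^ p * exp (-(2 * v : ℝ)⁻¹ * t ^ (2 : ℝ))),
    integral_rpow_mul_exp_neg_mul_rpow two_pos hp (inv_pos.2 hv₀), hsqrt, hpow]
  field_simp

/-- The third absolute moment `2√(2/π)` of the standard Gaussian. -/
noncomputable def gaussianAbsThirdMoment : ℝ≥0 := 2 * NNReal.sqrt (2 / NNReal.pi)

theorem coe_gaussianAbsThirdMoment : (gaussianAbsThirdMoment : ℝ) = 2 * √(2 / π) := by
  simp [gaussianAbsThirdMoment]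

theorem gaussianAbsThirdMoment_pos : 0 < gaussianAbsThirdMoment := by
  simp [gaussianAbsThirdMoment, NNReal.pi_pos]

theorem gaussianAbsThirdMoment_le : (gaussianAbsThirdMoment : ℝ) ≤ 8 / 5 := by
  have hsqrt : √(2 / π) ≤ 4 / 5 := by
    refine sqrt_le_iff.2 ⟨by norm_num, ?_⟩
    rw [div_le_iff₀ pi_pos]
    linarith [pi_gt_d2]
  rw [coe_gaussianAbsThirdMoment]
  linarith

theorem integral_abs_pow_three_gaussianReal (v : ℝ≥0) :
    ∫ y, |y| ^ 3 ∂gaussianReal 0 v = gaussianAbsThirdMoment * v ^ (3 / 2 : ℝ) := by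
  rcases eq_or_ne v 0 with rfl | hv
  · simp
  have hconst : (2 : ℝ) ^ (3 / 2 : ℝ) / √π = gaussianAbsThirdMoment := by
    rw [show (3 / 2 : ℝ) = 1 + 1 / 2 by norm_num, rpow_add two_pos, rpow_one, ← sqrt_eq_rpow,
      coe_gaussianAbsThirdMoment, sqrt_div zero_le_two, mul_div_assoc]
  have h := integral_abs_rpow_gaussianReal hv (p := 3) (by norm_num)
  rw [show ((3 : ℝ) + 1) / 2 = 2 by norm_num, Gamma_two, mul_one,
    mul_rpow zero_le_two v.coe_nonneg, mul_div_right_comm, hconst] at h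
  exact_mod_cast h

/-! ### Rademacher sums -/

section Rademacher

variable {ι : Type*}

/-- The value of the Rademacher sum `∑ i ∈ s, a i * ε i` at a choice of signs `ε : ι → ℤˣ`; its
moments are averages `𝔼 ε` over all such choices. -/
def rademacherSum (a : ι → ℝ) (s : Finset ι) (ε : ι → ℤˣ) : ℝ := ∑ i ∈ s, a i * (ε i : ℤ)

variable [Fintype ι] [DecidableEq ι]

theorem expect_rademacherSum_insert (a : ι → ℝ) {s : Finset ι} {j : ι} (hj : j ∉ s) (f : ℝ → ℝ) :
    𝔼 ε, f (rademacherSum a (insert j s) ε) =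
      𝔼 ε, (f (rademacherSum a s ε + a j) + f (rademacherSum a s ε - a j)) / 2 := by
  let S := rademacherSum a s
  let flip : (ι → ℤˣ) ≃ (ι → ℤˣ) := Equiv.mulLeft (Pi.mulSingle j (-1))
  have hS (ε) : S (flip ε) = S ε := sum_congr rfl fun i hi ↦ by
    have hij : i ≠ j := fun h ↦ hj (h ▸ hi)
    simp [flip, hij]
  have hflip : 𝔼 ε, f (S ε + a j * (ε j : ℤ)) = 𝔼 ε, f (S ε - a j * (ε j : ℤ)) :=
    Fintype.expect_equiv flip _ _ fun ε ↦ by rw [hS]; simp [flip]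
  have hpair (ε : ι → ℤˣ) : f (S ε + a j * (ε j : ℤ)) + f (S ε - a j * (ε j : ℤ)) =
      f (S ε + a j) + f (S ε - a j) := by
    rcases Int.units_eq_one_or (ε j) with h | h
    · simp [h]
    · rw [add_comm]
      simp [h, ← sub_eq_add_neg]
  calc 𝔼 ε, f (rademacherSum a (insert j s) ε)
    _ = 𝔼 ε, f (S ε + a j * (ε j : ℤ)) :=
      expect_congr rfl fun ε _ ↦ by rw [rademacherSum, sum_insert hj, add_comm]; rfl
    _ = (𝔼 ε, f (S ε + a j * (ε j : ℤ)) + 𝔼 ε, f (S ε - a j * (ε j : ℤ))) / 2 := by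
      rw [← hflip, add_self_div_two]
    _ = 𝔼 ε, (f (S ε + a j) + f (S ε - a j)) / 2 := by
      rw [← expect_add_distrib, expect_div]
      simp only [hpair]

theorem expect_rademacherSum_sq (a : ι → ℝ) (s : Finset ι) :
    𝔼 ε, rademacherSum a s ε ^ 2 = ∑ i ∈ s, a i ^ 2 := by
  induction s using Finset.induction_on with
  | empty => simp [rademacherSum]
  | insert j s hj ih =>
    have hpar (x y : ℝ) : ((x + y) ^ 2 + (x - y) ^ 2) / 2 = y ^ 2 + x ^ 2 := by ring
    rw [expect_rademacherSum_insert a hj (· ^ 2), sum_insert hj, ← ih]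
    simp only [hpar, expect_add_distrib, Fintype.expect_const]

theorem expect_abs_add_rademacherSum_pow_three_le (a : ι → ℝ) (s : Finset ι) (w : ℝ) :
    𝔼 ε, |w + rademacherSum a s ε| ^ 3 ≤
      ∫ z, |w + z| ^ 3 ∂gaussianReal 0 (∑ i ∈ s, ‖a i‖₊ ^ 2) := by
  induction s using Finset.induction_on generalizing w with
  | empty => simp [rademacherSum]
  | insert j s hj ih =>
    calc 𝔼 ε, |w + rademacherSum a (insert j s) ε| ^ 3
      _ = (𝔼 ε, |w + a j + rademacherSum a s ε| ^ 3 +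
          𝔼 ε, |w - a j + rademacherSum a s ε| ^ 3) / 2 := by
        rw [expect_rademacherSum_insert a hj (fun t ↦ |w + t| ^ 3), ← expect_add_distrib,
          expect_div]
        exact expect_congr rfl fun ε _ ↦ by ring_nf
      _ ≤ (∫ z, |w + a j + z| ^ 3 ∂gaussianReal 0 (∑ i ∈ s, ‖a i‖₊ ^ 2) +
          ∫ z, |w - a j + z| ^ 3 ∂gaussianReal 0 (∑ i ∈ s, ‖a i‖₊ ^ 2)) / 2 := by
        linarith [ih (w + a j), ih (w - a j)]
      _ ≤ ∫ z, |w + z| ^ 3 ∂gaussianReal 0 (∑ i ∈ insert j s, ‖a i‖₊ ^ 2) := by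
        rw [sum_insert hj, add_comm (‖a j‖₊ ^ 2)]
        linarith [integral_abs_add_pow_three_gaussianReal_add_le (∑ i ∈ s, ‖a i‖₊ ^ 2) (a j) w]

theorem khintchine {p : ℝ} (hp₀ : 0 < p) (hp : p < 2) (a : ι → ℝ) (s : Finset ι) :
    (∑ i ∈ s, ‖a i‖₊ ^ 2) ^ (p / 2) ≤
      gaussianAbsThirdMoment ^ (2 - p) * 𝔼 ε, ‖rademacherSum a s ε‖₊ ^ p := by
  set κ := gaussianAbsThirdMoment
  set S := ∑ i ∈ s, ‖a i‖₊ ^ 2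
  set P := 𝔼 ε, ‖rademacherSum a s ε‖₊ ^ p
  have hsecond : 𝔼 ε, ‖rademacherSum a s ε‖₊ ^ (2 : ℝ) = S := by
    have h := expect_rademacherSum_sq a s
    rw [← NNReal.coe_inj]
    simpa [S, NNReal.coe_expect] using h
  have hthird : 𝔼 ε, ‖rademacherSum a s ε‖₊ ^ (3 : ℝ) ≤ κ * S ^ (3 / 2 : ℝ) := by
    have h := expect_abs_add_rademacherSum_pow_three_le a s 0
    simp only [zero_add, integral_abs_pow_three_gaussianReal] at h
    rw [← NNReal.coe_le_coe]
    simpa [S, κ, NNReal.coe_expect] using h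
  rcases eq_or_ne S 0 with hS | hS
  · rw [hS, NNReal.zero_rpow (by positivity)]
    positivity
  have hlyapunov : S ^ (3 - p) ≤ P * (κ * S ^ (3 / 2 : ℝ)) ^ (2 - p) := by
    have h := expect_rpow_rpow_le (fun ε ↦ ‖rademacherSum a s ε‖₊) hp
      (by norm_num : (2 : ℝ) < 3) two_ne_zero
    rw [hsecond, show (3 - 2 : ℝ) = 1 by norm_num, NNReal.rpow_one] at h
    exact h.trans (by gcongr)
  have hexp : 3 - p = p / 2 + 3 / 2 * (2 - p) := by ring
  rw [hexp, NNReal.rpow_add hS, NNReal.mul_rpow, ← NNReal.rpow_mul, ← mul_assoc] at hlyapunov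
  rw [mul_comm]
  exact le_of_mul_le_mul_right hlyapunov (by positivity)

end Rademacher

/-! ### Coefficients of multilinear forms -/

section Forms

variable {ι : Type*} [Fintype ι] {n : ℕ}

theorem norm_units_le_one (ε : ι → ℤˣ) : ‖fun i ↦ ((ε i : ℤ) : ℝ)‖ ≤ 1 :=
  (pi_norm_le_iff_of_nonneg zero_le_one).2 fun i ↦ by
    rcases Int.units_eq_one_or (ε i) with h | h <;> simp [h]

theorem norm_sign_le_one (f : ι → ℝ) : ‖fun i ↦ (SignType.sign (f i) : ℝ)‖ ≤ 1 :=
  (pi_norm_le_iff_of_nonneg zero_le_one).2 fun i ↦ by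
    rcases lt_trichotomy (f i) 0 with h | h | h <;> simp [h]

theorem nnnorm_curryMid_apply_le (U : ContinuousMultilinearMap ℝ (fun _ : Fin (n + 1) ↦ ι → ℝ) ℝ)
    (j : Fin (n + 1)) {v : ι → ℝ} (hv : ‖v‖ ≤ 1) : ‖U.curryMid j v‖₊ ≤ ‖U‖₊ := by
  have h := (U.curryMid j).unit_le_opNorm v hv
  rwa [ContinuousMultilinearMap.norm_curryMid] at h

variable [DecidableEq ι]

/-- The coefficient `U (e_{i₁}, …, e_{iₙ})` of an `n`-linear form `U` on `ι → ℝ`, where the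
multi-index `(i₁, …, iₙ)` is a function `i : Fin n → ι`. -/
def formCoeff (U : ContinuousMultilinearMap ℝ (fun _ : Fin n ↦ ι → ℝ) ℝ) (i : Fin n → ι) : ℝ :=
  U fun k ↦ Pi.single (i k) 1

theorem nnnorm_formCoeff_le (U : ContinuousMultilinearMap ℝ (fun _ : Fin n ↦ ι → ℝ) ℝ)
    (i : Fin n → ι) : ‖formCoeff U i‖₊ ≤ ‖U‖₊ :=
  U.unit_le_opNorm <| (pi_norm_le_iff_of_nonneg zero_le_one).2 fun _ ↦
    (Pi.norm_single _).trans_le norm_one.le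

variable (U : ContinuousMultilinearMap ℝ (fun _ : Fin (n + 1) ↦ ι → ℝ) ℝ) (j : Fin (n + 1))

theorem formCoeff_curryMid (v : ι → ℝ) (y : Fin n → ι) :
    formCoeff (U.curryMid j v) y = ∑ x, formCoeff U (j.insertNth x y) * v x := by
  have hbasis (x : ι) : j.insertNth (Pi.single x 1) (fun k ↦ Pi.single (y k) 1) =
      fun k ↦ (Pi.single (j.insertNth (α := fun _ ↦ ι) x y k) 1 : ι → ℝ) := by
    funext k
    cases k using Fin.succAboveCases j <;> simp
  conv_lhs => rw [pi_eq_sum_univ' v]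
  simp only [formCoeff, map_sum, map_smul, _root_.sum_apply, smul_apply,
    ContinuousMultilinearMap.curryMid_apply, smul_eq_mul, hbasis, mul_comm]

theorem sum_nnnorm_formCoeff_insertNth_le (y : Fin n → ι) :
    ∑ x, ‖formCoeff U (j.insertNth x y)‖₊ ≤ ‖U‖₊ := by
  let v (x : ι) : ℝ := SignType.sign (formCoeff U (j.insertNth x y))
  have hsum : ∑ x, ‖formCoeff U (j.insertNth x y)‖ = formCoeff (U.curryMid j v) y := by
    simp only [formCoeff_curryMid, v, self_mul_sign, norm_eq_abs]
  rw [← NNReal.coe_le_coe, NNReal.coe_sum]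
  calc ∑ x, ‖formCoeff U (j.insertNth x y)‖
    _ ≤ ‖formCoeff (U.curryMid j v) y‖ := hsum.trans_le (le_norm_self _)
    _ ≤ ‖U.curryMid j v‖ := nnnorm_formCoeff_le _ y
    _ ≤ ‖U‖ := nnnorm_curryMid_apply_le U j (norm_sign_le_one _)

theorem sum_rpow_sum_sq_formCoeff_le {p : ℝ} (hp₀ : 0 < p) (hp : p < 2) {C : ℝ≥0}
    (hC : ∀ V : ContinuousMultilinearMap ℝ (fun _ : Fin n ↦ ι → ℝ) ℝ,
      ∑ i, ‖formCoeff V i‖₊ ^ p ≤ (C * ‖V‖₊) ^ p) :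
    ∑ y : Fin n → ι, (∑ x, ‖formCoeff U (j.insertNth x y)‖₊ ^ 2) ^ (p / 2) ≤
      (gaussianAbsThirdMoment ^ ((2 - p) / p) * C * ‖U‖₊) ^ p := by
  let V (ε : ι → ℤˣ) := U.curryMid j fun x ↦ ((ε x : ℤ) : ℝ)
  have hV (ε) : ‖V ε‖₊ ≤ ‖U‖₊ := nnnorm_curryMid_apply_le U j (norm_units_le_one ε)
  have hsum (y ε) : rademacherSum (fun x ↦ formCoeff U (j.insertNth x y)) univ ε =
      formCoeff (V ε) y := (formCoeff_curryMid U j _ y).symm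
  calc ∑ y : Fin n → ι, (∑ x, ‖formCoeff U (j.insertNth x y)‖₊ ^ 2) ^ (p / 2)
    _ ≤ ∑ y, gaussianAbsThirdMoment ^ (2 - p) * 𝔼 ε, ‖formCoeff (V ε) y‖₊ ^ p :=
      sum_le_sum fun y _ ↦ by
        simpa only [hsum] using khintchine hp₀ hp (fun x ↦ formCoeff U (j.insertNth x y)) univ
    _ = gaussianAbsThirdMoment ^ (2 - p) * 𝔼 ε, ∑ y, ‖formCoeff (V ε) y‖₊ ^ p := by
      rw [← mul_sum, expect_sum_comm]
    _ ≤ gaussianAbsThirdMoment ^ (2 - p) * (C * ‖U‖₊) ^ p := by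
      gcongr
      refine expect_le univ_nonempty fun ε _ ↦ (hC (V ε)).trans ?_
      gcongr
      exact hV ε
    _ = (gaussianAbsThirdMoment ^ ((2 - p) / p) * C * ‖U‖₊) ^ p := by
      rw [mul_assoc, NNReal.mul_rpow (x := gaussianAbsThirdMoment ^ _),
        ← NNReal.rpow_mul, div_mul_cancel₀ _ hp₀.ne']

theorem sum_formCoeff_rpow_le (V : ContinuousMultilinearMap ℝ (fun _ : Fin (n + 1) ↦ ι → ℝ) ℝ) :
    ∑ i, ‖formCoeff V i‖₊ ^ (2 * (n + 1) / (n + 2) : ℝ) ≤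
      (gaussianAbsThirdMoment ^ (harmonic n : ℝ) * ‖V‖₊) ^ (2 * (n + 1) / (n + 2) : ℝ) := by
  induction n with
  | zero =>
    rw [sum_fin_eq_sum_insertNth 0, Fintype.sum_unique]
    simpa using sum_nnnorm_formCoeff_insertNth_le V 0 default
  | succ n ih =>
    set κ := gaussianAbsThirdMoment
    set p : ℝ := 2 * (n + 1) / (n + 2) with hp
    have hp₂ : p < 2 := by
      rw [hp, div_lt_iff₀ (by positivity)]
      linarith
    have hκ : κ ^ ((2 - p) / p) * κ ^ (harmonic n : ℝ) = κ ^ (harmonic (n + 1) : ℝ) := by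
      have hexp : (2 - p) / p = (n + 1 : ℝ)⁻¹ := by
        simp only [hp]
        field_simp
        ring
      rw [hexp, ← NNReal.rpow_add gaussianAbsThirdMoment_pos.ne', harmonic_succ, add_comm]
      push_cast
      rfl
    have hmixed (j : Fin (n + 2)) :
        ∑ y : Fin (n + 1) → ι, (∑ x, ‖formCoeff V (j.insertNth x y)‖₊ ^ 2) ^ (p / 2) ≤
          (κ ^ (harmonic (n + 1) : ℝ) * ‖V‖₊) ^ p :=
      hκ ▸ sum_rpow_sum_sq_formCoeff_le V j (by positivity) hp₂ ih
    have hinner : ((n + 1 : ℕ) / ((n + 1 : ℕ) + 1) : ℝ) = p / 2 := by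
      simp only [hp]
      push_cast
      field_simp
      ring
    refine (sum_rpow_le_prod_sum_sum_sq (by lia) fun i ↦ ‖formCoeff V i‖₊).trans ?_
    calc
      _ ≤ ∏ _j : Fin (n + 2), ((κ ^ (harmonic (n + 1) : ℝ) * ‖V‖₊) ^ p) ^
          (((n + 1 : ℕ) + 1) / ((n + 1 : ℕ) * ((n + 1 : ℕ) + 2)) : ℝ) := by
        rw [hinner]
        gcongr
        exact hmixed _
      _ = _ := by
        rw [prod_const, card_fin, ← NNReal.rpow_mul, ← NNReal.rpow_mul_natCast]
        congr 1
        simp only [hp]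
        push_cast
        field_simp

theorem bohnenblust_hille {n : ℕ} (hn : 1 ≤ n)
    (U : ContinuousMultilinearMap ℝ (fun _ : Fin n ↦ ι → ℝ) ℝ) :
    (∑ i, |formCoeff U i| ^ (2 * n / (n + 1) : ℝ)) ^ ((n + 1) / (2 * n) : ℝ) ≤
      gaussianAbsThirdMoment ^ (harmonic (n - 1) : ℝ) * ‖U‖ := by
  obtain ⟨n, rfl⟩ := Nat.exists_eq_add_of_le' hn
  have hinv : (((n + 1 : ℕ) + 1) / (2 * (n + 1 : ℕ)) : ℝ) = (2 * (n + 1) / (n + 2) : ℝ)⁻¹ := by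
    push_cast
    field_simp
    ring
  have h := NNReal.rpow_inv_le_iff (by positivity) |>.2 (sum_formCoeff_rpow_le U)
  rw [← hinv, ← NNReal.coe_le_coe] at h
  push_cast at h ⊢
  simpa [add_assoc, one_add_one_eq_two] using h

end Forms

/-! ### Growth of the constants -/

theorem log_gaussianAbsThirdMoment_le : log gaussianAbsThirdMoment ≤ 0.526322 := by
  have hpow : (8 / 5 : ℝ) ^ 25 ≤ exp 12 := calc
    (8 / 5 : ℝ) ^ 25 ≤ 2.718 ^ 12 := by norm_num
    _ ≤ exp 1 ^ 12 := by
      gcongr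
      linarith [exp_one_gt_d9]
    _ = exp 12 := by rw [← exp_nat_mul]; norm_num
  have hlog : 25 * log (8 / 5) ≤ 12 := by
    rw [← log_exp 12, ← Nat.cast_ofNat, ← log_pow]
    exact log_le_log (by positivity) hpow
  linarith [log_le_log (NNReal.coe_pos.2 gaussianAbsThirdMoment_pos) gaussianAbsThirdMoment_le]

theorem rpow_one_div_succ_le_div_rpow {x s : ℝ} (hx : 0 < x) (hs : 0 ≤ s) (hxs : log x ≤ s)
    {k : ℕ} (hk : k ≠ 0) : x ^ (1 / (k + 1) : ℝ) ≤ ((k + 1) / k : ℝ) ^ s := by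
  have : (0 : ℝ) < k := by positivity
  have hlog : 1 / (k + 1) ≤ log ((k + 1) / k : ℝ) := calc
    1 / (k + 1 : ℝ) = 1 - ((k + 1) / k : ℝ)⁻¹ := by field_simp; ring
    _ ≤ log ((k + 1) / k : ℝ) := one_sub_inv_le_log_of_pos (by positivity)
  rw [rpow_def_of_pos hx, rpow_def_of_pos (by positivity), exp_le_exp, mul_comm]
  calc 1 / (k + 1) * log x
    _ ≤ 1 / (k + 1) * s := by gcongr
    _ ≤ log ((k + 1) / k) * s := by gcongr

theorem rpow_harmonic_le {x s C : ℝ} (hx : 0 < x) (hs : 0 ≤ s) (hxs : log x ≤ s) {m : ℕ}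
    (hm : m ≠ 0) (hC : x ^ (harmonic m : ℝ) ≤ C * m ^ s) {k : ℕ} (hmk : m ≤ k) :
    x ^ (harmonic k : ℝ) ≤ C * k ^ s := by
  induction k, hmk using Nat.le_induction with
  | base => exact hC
  | succ k hmk ih =>
    have hk : (0 : ℝ) < k := by exact_mod_cast (Nat.pos_of_ne_zero hm).trans_le hmk
    calc x ^ (harmonic (k + 1) : ℝ)
      _ = x ^ (harmonic k : ℝ) * x ^ (1 / (k + 1) : ℝ) := by
        rw [← rpow_add hx, harmonic_succ]
        push_cast
        rw [one_div]
      _ ≤ C * k ^ s * ((k + 1) / k : ℝ) ^ s :=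
        mul_le_mul ih (rpow_one_div_succ_le_div_rpow hx hs hxs (Nat.cast_pos.1 hk).ne')
          (by positivity) ((rpow_nonneg hx.le _).trans ih)
      _ = C * (k + 1 : ℕ) ^ s := by
        rw [mul_assoc, ← mul_rpow hk.le (by positivity), mul_div_cancel₀ _ hk.ne']
        push_cast
        rfl

theorem gaussianAbsThirdMoment_rpow_harmonic_four_le :
    (gaussianAbsThirdMoment : ℝ) ^ (harmonic 4 : ℝ) ≤ 1.303787 * (4 : ℝ) ^ (0.526322 : ℝ) := by
  have hharmonic : ((harmonic 4 : ℚ) : ℝ) = 25 / 12 := by norm_num [harmonic, sum_range_succ]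
  have hupper : (8 / 5 : ℝ) ^ (25 / 12 : ℝ) ≤ 2.69 := by
    rw [div_eq_mul_inv 25 12, rpow_mul (by norm_num), rpow_inv_le_iff_of_pos (by positivity)
      (by norm_num) (by norm_num)]
    norm_num
  have hlower : (2.07 : ℝ) ≤ 4 ^ (21 / 40 : ℝ) := by
    rw [div_eq_mul_inv 21 40, rpow_mul (by norm_num), le_rpow_inv_iff_of_pos (by norm_num)
      (by positivity) (by norm_num)]
    norm_num
  calc (gaussianAbsThirdMoment : ℝ) ^ (harmonic 4 : ℝ)
    _ ≤ (8 / 5 : ℝ) ^ (25 / 12 : ℝ) := by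
      rw [hharmonic]
      gcongr
      exact gaussianAbsThirdMoment_le
    _ ≤ 1.303787 * 2.07 := hupper.trans (by norm_num)
    _ ≤ 1.303787 * (4 : ℝ) ^ (21 / 40 : ℝ) := by gcongr
    _ ≤ 1.303787 * (4 : ℝ) ^ (0.526322 : ℝ) := by
      gcongr <;> norm_num

theorem stmt8_general {ι : Type*} [Fintype ι] [DecidableEq ι] {n : ℕ} (hn : 5 ≤ n)
    (U : ContinuousMultilinearMap ℝ (fun _ : Fin n ↦ ι → ℝ) ℝ) :
    (∑ i : Fin n → ι, |U fun k ↦ Pi.single (i k) 1| ^ (2 * n / (n + 1) : ℝ)) ^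
      ((n + 1) / (2 * n) : ℝ) ≤ 1.303787 * ((n : ℝ) - 1) ^ (0.526322 : ℝ) * ‖U‖ := by
  have hconst := rpow_harmonic_le (NNReal.coe_pos.2 gaussianAbsThirdMoment_pos)
    (by norm_num) log_gaussianAbsThirdMoment_le four_ne_zero
    (by exact_mod_cast gaussianAbsThirdMoment_rpow_harmonic_four_le) (Nat.le_sub_one_of_lt hn)
  rw [Nat.cast_pred (by lia)] at hconst
  exact (bohnenblust_hille (by lia) U).trans (mul_le_mul_of_nonneg_right hconst (norm_nonneg _))

end

theorem stmt8 (n : ℕ) (hn : 2 ^ 8 < n) (N : ℕ) (hN : 0 < N)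
    (U : ContinuousMultilinearMap ℝ (fun _ : Fin n => (Fin N → ℝ)) ℝ) :
    BHreal n N U ≤ 1.303787 * ((n : ℝ) - 1) ^ (0.526322 : ℝ) * ‖U‖ :=
  stmt8_general (by lia) U
end

section
/- For every integer n > 2^3 = 8, every positive integer N, and every n-linear form U : (ℂ^N)^n → ℂ, one has (∑_{i₁,…,iₙ=1}^N |U(e_{i₁},…,e_{iₙ})|^{2n/(n+1)})^{(n+1)/(2n)} ≤ 1.02960973695 · (n-1)^{0.304975} · ‖U‖. -/
open Real

/-- The Bohnenblust--Hille quantity of an `n`-linear form on `ℓ_∞^N` over `ℂ`: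
`(∑_{i₁,…,iₙ} |U(e_{i₁},…,e_{iₙ})|^{2n/(n+1)})^{(n+1)/(2n)}`. -/
noncomputable def BHcomplex (n N : ℕ)
    (U : ContinuousMultilinearMap ℂ (fun _ : Fin n => (Fin N → ℂ)) ℂ) : ℝ :=
  (∑ i : Fin n → Fin N,
      ‖U (fun k => Pi.single (i k) (1 : ℂ))‖ ^ ((2 * n : ℝ) / (n + 1)))
    ^ ((n + 1 : ℝ) / (2 * n))

/-!
Averaging the `k`-th variable of an `(m + 1)`-linear form over roots of unity reduces it to
`m`-linear forms, and a Khinchine inequality for exponents `2 * s`, `s = m / (m + 1)`, bounds the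
`ℓ²`-norms in the `k`-th index; Hölder and Minkowski for mixed norms (Blei) combine the `m + 1`
resulting bounds. Hence the Bohnenblust--Hille constants satisfy
`C (m + 1) ≤ K s ^ (-(m + 1) / (2 * m)) * C m`, where `K s` is the Khinchine constant.

For `K s`, note that `t ^ s` is a positive mixture of the functions `t / (l + t)`. On `t ≥ 0` each
of these dominates its quartic Hermite interpolant at `0` and at the double nodes `3 ± √3`, so only
the moments `𝔼 |∑ aᵢ zᵢ| ^ (2 * r)` with `r ≤ 4` are needed, and these are already the Steinhaus
ones when the `zᵢ` are fifth roots of unity. The result is the two-point Gauss rule for the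
Gaussian moment `Γ (s + 1)`. It gives `C 3 ≤ √2` and `C (m + 1) ≤ 2 ^ (0.3745 / m) * C m`; the
growth exponent `0.304975` has room to spare since `0.3745 * log 2 < 0.26`.
-/

open Finset
open scoped BigOperators

section Steinhaus

variable {q : ℕ} [NeZero q]

lemma expect_stdAddChar_pow_mul_conj {k l : ℕ} (hk : k < q) (hl : l < q) :
    𝔼 j : ZMod q, ZMod.stdAddChar j ^ k * (starRingEnd ℂ) (ZMod.stdAddChar j ^ l) =
      if k = l then 1 else 0 := by
  have hkl : (k - l : ZMod q) = 0 ↔ k = l := by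
    rw [sub_eq_zero, ZMod.natCast_eq_natCast_iff', Nat.mod_eq_of_lt hk, Nat.mod_eq_of_lt hl]
  have hsum := AddChar.sum_mulShift (k - l : ZMod q) (ZMod.isPrimitive_stdAddChar q)
  simp only [hkl, ZMod.card] at hsum
  have hterm (j : ZMod q) : ZMod.stdAddChar j ^ k * (starRingEnd ℂ) (ZMod.stdAddChar j ^ l) =
      ZMod.stdAddChar (j * (k - l : ZMod q)) := by
    rw [map_pow, ← AddChar.map_neg_eq_conj, ← AddChar.map_nsmul_eq_pow,
      ← AddChar.map_nsmul_eq_pow, ← AddChar.map_add_eq_mul]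
    congr 1
    simp only [nsmul_eq_mul]
    ring
  simp only [hterm, Fintype.expect_eq_sum_div_card, hsum, ZMod.card]
  split_ifs <;> simp [NeZero.ne]

lemma expect_norm_sq_sum_mul_stdAddChar_pow {n : ℕ} (hn : n ≤ q) (c : ℕ → ℂ) :
    𝔼 j : ZMod q, ‖∑ k ∈ range n, c k * ZMod.stdAddChar j ^ k‖ ^ 2 = ∑ k ∈ range n, ‖c k‖ ^ 2 := by
  apply Complex.ofReal_injective
  calc ((𝔼 j : ZMod q, ‖∑ k ∈ range n, c k * ZMod.stdAddChar j ^ k‖ ^ 2 : ℝ) : ℂ)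
      = 𝔼 j : ZMod q, ∑ k ∈ range n, ∑ l ∈ range n, c k * (starRingEnd ℂ) (c l) *
          (ZMod.stdAddChar j ^ k * (starRingEnd ℂ) (ZMod.stdAddChar j ^ l)) := by
        rw [Complex.ofReal_expect]
        refine expect_congr rfl fun j _ => ?_
        rw [Complex.ofReal_pow, ← Complex.mul_conj', map_sum, sum_mul_sum]
        refine sum_congr rfl fun k _ => sum_congr rfl fun l _ => ?_
        rw [map_mul]
        ring
    _ = ∑ k ∈ range n, ∑ l ∈ range n, c k * (starRingEnd ℂ) (c l) * if k = l then 1 else 0 := by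
        rw [expect_sum_comm]
        refine sum_congr rfl fun k hk => ?_
        rw [expect_sum_comm]
        refine sum_congr rfl fun l hl => ?_
        rw [← mul_expect, expect_stdAddChar_pow_mul_conj ((mem_range.mp hk).trans_le hn)
          ((mem_range.mp hl).trans_le hn)]
    _ = ((∑ k ∈ range n, ‖c k‖ ^ 2 : ℝ) : ℂ) := by
        push_cast
        refine sum_congr rfl fun k hk => ?_
        rw [← Complex.mul_conj']
        simp [mul_ite, hk]

lemma expect_norm_mul_stdAddChar_add_pow {r : ℕ} (hr : r < q) (x y : ℂ) :
    𝔼 j : ZMod q, ‖x * ZMod.stdAddChar j + y‖ ^ (2 * r) =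
      ∑ k ∈ range (r + 1), (r.choose k : ℝ) ^ 2 * ‖x‖ ^ (2 * k) * ‖y‖ ^ (2 * (r - k)) := by
  calc 𝔼 j : ZMod q, ‖x * ZMod.stdAddChar j + y‖ ^ (2 * r)
      = 𝔼 j : ZMod q, ‖∑ k ∈ range (r + 1),
          (r.choose k * x ^ k * y ^ (r - k)) * ZMod.stdAddChar j ^ k‖ ^ 2 := by
        refine expect_congr rfl fun j _ => ?_
        rw [mul_comm 2 r, pow_mul, ← norm_pow, add_pow]
        congr 2
        exact sum_congr rfl fun k _ => by ring
    _ = ∑ k ∈ range (r + 1), ‖(r.choose k * x ^ k * y ^ (r - k) : ℂ)‖ ^ 2 :=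
        expect_norm_sq_sum_mul_stdAddChar_pow hr _
    _ = ∑ k ∈ range (r + 1), (r.choose k : ℝ) ^ 2 * ‖x‖ ^ (2 * k) * ‖y‖ ^ (2 * (r - k)) := by
        refine sum_congr rfl fun k _ => ?_
        simp only [norm_mul, norm_pow, Complex.norm_natCast]
        ring

/-- The `q`-th roots of unity version of a Steinhaus sum `∑ aᵢ zᵢ`: the unimodular variables are
the values `zᵢ = exp (2πi εᵢ / q)` of the standard additive character of `ZMod q`. -/
noncomputable def steinhausSum {N : ℕ} (a : Fin N → ℂ) (ε : Fin N → ZMod q) : ℂ :=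
  ∑ i, a i * ZMod.stdAddChar (ε i)

/-- The moment of order `2r` of a Steinhaus sum over the `q`-th roots of unity. -/
noncomputable def steinhausMoment (q : ℕ) [NeZero q] (r : ℕ) {N : ℕ} (a : Fin N → ℂ) : ℝ :=
  𝔼 ε : Fin N → ZMod q, ‖steinhausSum a ε‖ ^ (2 * r)

lemma steinhausSum_smul {N : ℕ} (c : ℂ) (a : Fin N → ℂ) (ε : Fin N → ZMod q) :
    steinhausSum (c • a) ε = c * steinhausSum a ε := by
  simp only [steinhausSum, Pi.smul_apply, smul_eq_mul, mul_sum, mul_assoc]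

lemma expect_fin_cons {κ : Type*} [Fintype κ] {N : ℕ} (f : (Fin (N + 1) → κ) → ℝ) :
    𝔼 ε, f ε = 𝔼 ε : Fin N → κ, 𝔼 j, f (Fin.cons j ε) := by
  rw [← Fintype.expect_equiv (Fin.consEquiv fun _ => κ) (fun z => f (Fin.cons z.1 z.2)) f
    fun _ => rfl, ← univ_product_univ, expect_product, expect_comm]

lemma steinhausMoment_succ {r N : ℕ} (hr : r < q) (a : Fin (N + 1) → ℂ) :
    steinhausMoment q r a = ∑ k ∈ range (r + 1),
      (r.choose k : ℝ) ^ 2 * ‖a 0‖ ^ (2 * k) * steinhausMoment q (r - k) (Fin.tail a) := by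
  simp only [steinhausMoment, mul_expect]
  rw [expect_fin_cons, ← expect_sum_comm]
  refine expect_congr rfl fun ε _ => ?_
  rw [← expect_norm_mul_stdAddChar_add_pow hr]
  simp only [steinhausSum, Fin.sum_univ_succ, Fin.cons_zero, Fin.cons_succ, Fin.tail]

lemma steinhausMoment_zero {N : ℕ} (a : Fin N → ℂ) : steinhausMoment q 0 a = 1 := by
  simp [steinhausMoment]

lemma steinhausMoment_of_isEmpty {r : ℕ} (hr : r ≠ 0) (a : Fin 0 → ℂ) :
    steinhausMoment q r a = 0 := by
  simp [steinhausMoment, steinhausSum, hr]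

lemma steinhausMoment_one (hq : 1 < q) {N : ℕ} (a : Fin N → ℂ) :
    steinhausMoment q 1 a = ∑ i, ‖a i‖ ^ 2 := by
  induction N with
  | zero => simp [steinhausMoment_of_isEmpty]
  | succ N ih =>
    rw [steinhausMoment_succ hq, Fin.sum_univ_succ]
    simp [sum_range_succ, steinhausMoment_zero, ih, Fin.tail, add_comm]

lemma steinhausMoment_two (hq : 2 < q) {N : ℕ} (a : Fin N → ℂ) :
    steinhausMoment q 2 a = 2 * (∑ i, ‖a i‖ ^ 2) ^ 2 - ∑ i, ‖a i‖ ^ 4 := by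
  induction N with
  | zero => simp [steinhausMoment_of_isEmpty]
  | succ N ih =>
    rw [steinhausMoment_succ hq]
    simp only [sum_range_succ, sum_range_zero, Nat.reduceAdd, Nat.reduceSub, Nat.reduceMul,
      Nat.choose_zero_right, Nat.choose_succ_self_right, Nat.choose_self,
      Nat.cast_one, Nat.cast_ofNat, tsub_self, tsub_zero, Fin.tail, Fin.sum_univ_succ, ih,
      steinhausMoment_zero, steinhausMoment_one (by omega : 1 < q)]
    ring

lemma steinhausMoment_three (hq : 3 < q) {N : ℕ} (a : Fin N → ℂ) :
    steinhausMoment q 3 a = 6 * (∑ i, ‖a i‖ ^ 2) ^ 3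
      - 9 * (∑ i, ‖a i‖ ^ 2) * (∑ i, ‖a i‖ ^ 4) + 4 * ∑ i, ‖a i‖ ^ 6 := by
  induction N with
  | zero => simp [steinhausMoment_of_isEmpty]
  | succ N ih =>
    rw [steinhausMoment_succ hq]
    simp only [sum_range_succ, sum_range_zero, Nat.reduceAdd, Nat.reduceSub, Nat.reduceMul,
      Nat.choose_zero_right, Nat.choose_one_right, Nat.choose_succ_self_right, Nat.choose_self,
      Nat.cast_one, Nat.cast_ofNat, tsub_self, tsub_zero, Fin.tail, Fin.sum_univ_succ, ih,
      steinhausMoment_zero, steinhausMoment_one (by omega : 1 < q),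
      steinhausMoment_two (by omega : 2 < q)]
    ring

lemma steinhausMoment_four (hq : 4 < q) {N : ℕ} (a : Fin N → ℂ) :
    steinhausMoment q 4 a = 24 * (∑ i, ‖a i‖ ^ 2) ^ 4
      - 72 * (∑ i, ‖a i‖ ^ 2) ^ 2 * (∑ i, ‖a i‖ ^ 4) + 18 * (∑ i, ‖a i‖ ^ 4) ^ 2
      + 64 * (∑ i, ‖a i‖ ^ 2) * (∑ i, ‖a i‖ ^ 6) - 33 * ∑ i, ‖a i‖ ^ 8 := by
  induction N with
  | zero => simp [steinhausMoment_of_isEmpty]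
  | succ N ih =>
    rw [steinhausMoment_succ hq]
    simp only [sum_range_succ, sum_range_zero, Nat.reduceAdd, Nat.reduceSub, Nat.reduceMul,
      Nat.reduceDiv, Nat.choose_zero_right, Nat.choose_one_right, Nat.choose_two_right,
      Nat.choose_succ_self_right, Nat.choose_self,
      Nat.cast_one, Nat.cast_ofNat, tsub_self, tsub_zero, Fin.tail, Fin.sum_univ_succ, ih,
      steinhausMoment_zero, steinhausMoment_one (by omega : 1 < q),
      steinhausMoment_two (by omega : 2 < q), steinhausMoment_three (by omega : 3 < q)]
    ring

end Steinhaus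

section Stieltjes

/-- The quartic polynomial in `t` that interpolates `t / (l + t)` at `0` and, to second order, at
the nodes `3 ± √3`, i.e. the roots of `t ^ 2 - 6 * t + 6`. -/
noncomputable def hermiteMinorant (l t : ℝ) : ℝ :=
  ((l ^ 3 + 12 * l ^ 2 + 48 * l + 72) * t - (l ^ 2 + 12 * l + 48) * t ^ 2 + (l + 12) * t ^ 3
    - t ^ 4) / (l ^ 2 + 6 * l + 6) ^ 2

lemma hermiteMinorant_le_div_add {l t : ℝ} (hl : 0 < l) (ht : 0 ≤ t) :
    hermiteMinorant l t ≤ t / (l + t) := by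
  have hdiff : t / (l + t) - hermiteMinorant l t =
      t * (t ^ 2 - 6 * t + 6) ^ 2 / ((l + t) * (l ^ 2 + 6 * l + 6) ^ 2) := by
    rw [hermiteMinorant]
    field_simp
    ring
  rw [← sub_nonneg, hdiff]
  positivity

-- With `b i = |a i| ^ 2` this is the slack of `div_le_expect_steinhausSum`: the part of the
-- expectation of the minorant that vanishes for a Gaussian variable in place of the sum.
lemma moment_remainder_nonneg {ι : Type*} [Fintype ι] {b : ι → ℝ} (hb : ∀ i, 0 ≤ b i)
    (hb1 : ∑ i, b i = 1) {l : ℝ} (hl : 0 < l) :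
    0 ≤ (l ^ 2 + 3 * l + 12) * (∑ i, b i ^ 2) + (4 * l - 16) * (∑ i, b i ^ 3)
      - 18 * (∑ i, b i ^ 2) ^ 2 + 33 * ∑ i, b i ^ 4 := by
  have hCS : (∑ i, b i ^ 2) ^ 2 ≤ ∑ i, b i ^ 3 := by
    have h := sum_sq_le_sum_mul_sum_of_sq_le_mul univ (r := fun i => b i ^ 2)
      (fun i _ => hb i) (fun i _ => pow_nonneg (hb i) 3) fun i _ => le_of_eq (by ring)
    rwa [hb1, one_mul] at h
  have hquad :
      0 ≤ ∑ i, b i ^ 2 * (l ^ 2 + 3 * l + 4 * l * b i + (12 - 34 * b i + 33 * b i ^ 2)) := by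
    refine sum_nonneg fun i _ => ?_
    have hbi := hb i
    have : 0 ≤ 12 - 34 * b i + 33 * b i ^ 2 := by nlinarith [sq_nonneg (33 * b i - 17)]
    positivity
  have hexpand : ∑ i, b i ^ 2 * (l ^ 2 + 3 * l + 4 * l * b i + (12 - 34 * b i + 33 * b i ^ 2)) =
      (l ^ 2 + 3 * l + 12) * (∑ i, b i ^ 2) + (4 * l - 34) * (∑ i, b i ^ 3)
        + 33 * ∑ i, b i ^ 4 := by
    simp only [mul_sum, ← sum_add_distrib]
    exact sum_congr rfl fun i _ => by ring
  linarith

variable {q : ℕ} [NeZero q] {N : ℕ}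

lemma expect_hermiteMinorant_steinhausSum (l : ℝ) (a : Fin N → ℂ) :
    𝔼 ε : Fin N → ZMod q, hermiteMinorant l (‖steinhausSum a ε‖ ^ 2) =
      ((l ^ 3 + 12 * l ^ 2 + 48 * l + 72) * steinhausMoment q 1 a
        - (l ^ 2 + 12 * l + 48) * steinhausMoment q 2 a + (l + 12) * steinhausMoment q 3 a
        - steinhausMoment q 4 a) / (l ^ 2 + 6 * l + 6) ^ 2 := by
  simp only [hermiteMinorant, steinhausMoment, ← expect_div, expect_sub_distrib,
    expect_add_distrib, ← mul_expect, ← pow_mul, Nat.reduceMul]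

lemma div_le_expect_steinhausSum (hq : 4 < q) {a : Fin N → ℂ} (ha : ∑ i, ‖a i‖ ^ 2 = 1) {l : ℝ}
    (hl : 0 < l) : (l + 4) / (l ^ 2 + 6 * l + 6) ≤
      𝔼 ε : Fin N → ZMod q, ‖steinhausSum a ε‖ ^ 2 / (l + ‖steinhausSum a ε‖ ^ 2) := by
  have hrem := moment_remainder_nonneg (b := fun i => ‖a i‖ ^ 2) (fun i => by positivity) ha hl
  simp only [← pow_mul, Nat.reduceMul] at hrem
  calc (l + 4) / (l ^ 2 + 6 * l + 6)
      = (l + 4) * (l ^ 2 + 6 * l + 6) / (l ^ 2 + 6 * l + 6) ^ 2 := by field_simp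
    _ ≤ 𝔼 ε : Fin N → ZMod q, hermiteMinorant l (‖steinhausSum a ε‖ ^ 2) := by
        rw [expect_hermiteMinorant_steinhausSum, steinhausMoment_one (by omega),
          steinhausMoment_two (by omega), steinhausMoment_three (by omega),
          steinhausMoment_four hq, ha]
        gcongr
        linarith
    _ ≤ _ := expect_le_expect fun ε _ => hermiteMinorant_le_div_add hl (by positivity)

end Stieltjes

section Comparison

open MeasureTheory

variable {ι κ : Type*} [Fintype ι] [Fintype κ]

lemma sum_mul_rpowIntegrand₀₁ {s : ℝ} (hs : s ∈ Set.Ioo 0 1) {l : ℝ} (hl : 0 ≤ l) (w : ι → ℝ)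
    {x : ι → ℝ} (hx : ∀ i, 0 ≤ x i) :
    ∑ i, w i * Real.rpowIntegrand₀₁ s l (x i) = l ^ (s - 1) * ∑ i, w i * (x i / (l + x i)) := by
  rw [mul_sum]
  refine sum_congr rfl fun i _ => ?_
  rw [Real.rpowIntegrand₀₁_eq_pow_div hs hl (hx i)]
  ring

lemma sum_mul_rpow_le_of_forall_sum_mul_div_add_le {w x : ι → ℝ} {v y : κ → ℝ}
    (hx : ∀ i, 0 ≤ x i) (hy : ∀ j, 0 ≤ y j)
    (h : ∀ l : ℝ, 0 < l → ∑ i, w i * (x i / (l + x i)) ≤ ∑ j, v j * (y j / (l + y j)))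
    {s : ℝ} (hs : s ∈ Set.Ioo 0 1) : ∑ i, w i * x i ^ s ≤ ∑ j, v j * y j ^ s := by
  obtain ⟨μ, hμ⟩ := Real.exists_measure_rpow_eq_integral_rpowIntegrand₀₁ hs
  have hintw i : IntegrableOn (fun l => w i * Real.rpowIntegrand₀₁ s l (x i)) (Set.Ioi 0) μ :=
    (hμ (x i) (hx i)).1.const_mul _
  have hintv j : IntegrableOn (fun l => v j * Real.rpowIntegrand₀₁ s l (y j)) (Set.Ioi 0) μ :=
    (hμ (y j) (hy j)).1.const_mul _
  calc ∑ i, w i * x i ^ s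
      = ∫ l in Set.Ioi 0, ∑ i, w i * Real.rpowIntegrand₀₁ s l (x i) ∂μ := by
        simp only [integral_finsetSum _ fun i _ => hintw i, integral_const_mul,
          ← (hμ _ (hx _)).2]
    _ ≤ ∫ l in Set.Ioi 0, ∑ j, v j * Real.rpowIntegrand₀₁ s l (y j) ∂μ := by
        refine setIntegral_mono_on (integrable_finsetSum _ fun i _ => hintw i)
          (integrable_finsetSum _ fun j _ => hintv j) measurableSet_Ioi fun l hl => ?_
        have hl0 : 0 < l := hl
        rw [sum_mul_rpowIntegrand₀₁ hs hl0.le w hx, sum_mul_rpowIntegrand₀₁ hs hl0.le v hy]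
        exact mul_le_mul_of_nonneg_left (h l hl0) (by positivity)
    _ = ∑ j, v j * y j ^ s := by
        simp only [integral_finsetSum _ fun j _ => hintv j, integral_const_mul,
          ← (hμ _ (hy _)).2]

end Comparison

section Khinchine

/-- The lower constant in the Khinchine inequality
`c * (∑ |aᵢ|²) ^ s ≤ 𝔼 |∑ aᵢ zᵢ| ^ (2 * s)`, `0 < s < 1`, namely the value of the
two-point Gauss--Laguerre rule, with nodes `3 ± √3`, for `Γ (s + 1) = ∫ t ^ (s - 1) * (t * e⁻ᵗ)`. -/
noncomputable def khinchineConst (s : ℝ) : ℝ := (3 - √3) ^ (s - 2) + (3 + √3) ^ (s - 2)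

lemma sqrt_three_mem_Ioo : √3 ∈ Set.Ioo 1.732 1.7321 := by
  constructor <;> norm_num [Real.lt_sqrt, Real.sqrt_lt']

lemma khinchineConst_pos (s : ℝ) : 0 < khinchineConst s := by
  have hu : 0 < 3 - √3 := by linarith [sqrt_three_mem_Ioo.2]
  unfold khinchineConst
  positivity

variable {q : ℕ} [NeZero q] {N : ℕ}

lemma khinchineConst_le_expect (hq : 4 < q) {a : Fin N → ℂ} (ha : ∑ i, ‖a i‖ ^ 2 = 1) {s : ℝ}
    (hs : s ∈ Set.Ioo 0 1) :
    khinchineConst s ≤ 𝔼 ε : Fin N → ZMod q, (‖steinhausSum a ε‖ ^ 2) ^ s := by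
  obtain ⟨h3, h3'⟩ := sqrt_three_mem_Ioo
  have hsq : √3 ^ 2 = 3 := Real.sq_sqrt (by norm_num)
  have hu : 0 < 3 - √3 := by linarith
  have hv : 0 < 3 + √3 := by linarith
  have hcard (f : (Fin N → ZMod q) → ℝ) :
      𝔼 ε, f ε = ∑ ε, (Fintype.card (Fin N → ZMod q) : ℝ)⁻¹ * f ε := by
    rw [Fintype.expect_eq_sum_div_card, ← mul_sum, inv_mul_eq_div]
  have hmix (l : ℝ) (hl : 0 < l) : ∑ i, ![(3 - √3) ^ (-2 : ℝ), (3 + √3) ^ (-2 : ℝ)] i *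
      (![3 - √3, 3 + √3] i / (l + ![3 - √3, 3 + √3] i)) = (l + 4) / (l ^ 2 + 6 * l + 6) := by
    have hprod : l ^ 2 + 6 * l + 6 = (l + (3 - √3)) * (l + (3 + √3)) := by linear_combination hsq
    rw [hprod, Fin.sum_univ_two]
    simp only [Matrix.cons_val_zero, Matrix.cons_val_one, Real.rpow_neg hu.le,
      Real.rpow_neg hv.le, Real.rpow_two]
    field_simp
    linear_combination (l + 6) * hsq
  calc khinchineConst s
      = ∑ i, ![(3 - √3) ^ (-2 : ℝ), (3 + √3) ^ (-2 : ℝ)] i * ![3 - √3, 3 + √3] i ^ s := by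
        simp only [khinchineConst, Fin.sum_univ_two, Matrix.cons_val_zero, Matrix.cons_val_one,
          Matrix.cons_val_fin_one, ← Real.rpow_add hu, ← Real.rpow_add hv, neg_add_eq_sub]
    _ ≤ ∑ ε : Fin N → ZMod q, (Fintype.card (Fin N → ZMod q) : ℝ)⁻¹ *
          (‖steinhausSum a ε‖ ^ 2) ^ s := by
        refine sum_mul_rpow_le_of_forall_sum_mul_div_add_le
          (Fin.forall_fin_two.mpr ⟨hu.le, hv.le⟩) (fun ε => by positivity) (fun l hl => ?_) hs
        rw [hmix l hl, ← hcard]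
        exact div_le_expect_steinhausSum hq ha hl
    _ = 𝔼 ε : Fin N → ZMod q, (‖steinhausSum a ε‖ ^ 2) ^ s := (hcard _).symm

lemma khinchine (hq : 4 < q) (a : Fin N → ℂ) {s : ℝ}
    (hs : s ∈ Set.Ioo 0 1) : khinchineConst s * (∑ i, ‖a i‖ ^ 2) ^ s ≤
      𝔼 ε : Fin N → ZMod q, (‖steinhausSum a ε‖ ^ 2) ^ s := by
  set σ := ∑ i, ‖a i‖ ^ 2 with hσdef
  rcases (by positivity : 0 ≤ σ).eq_or_lt with hσ | hσ
  · rw [← hσ, Real.zero_rpow hs.1.ne', mul_zero]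
    exact expect_nonneg fun ε _ => by positivity
  have hnorm : ‖((√σ)⁻¹ : ℂ)‖ ^ 2 = σ⁻¹ := by
    rw [norm_inv, Complex.norm_real, norm_of_nonneg (Real.sqrt_nonneg _), inv_pow, sq_sqrt hσ.le]
  have hunit := khinchineConst_le_expect hq (a := ((√σ)⁻¹ : ℂ) • a) (s := s) ?_ hs
  · simp only [steinhausSum_smul, norm_mul, mul_pow, hnorm,
      Real.mul_rpow (inv_nonneg.2 hσ.le) (sq_nonneg _), ← mul_expect] at hunit
    rwa [Real.inv_rpow hσ.le, le_inv_mul_iff₀ (by positivity), mul_comm] at hunit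
  · simp only [Pi.smul_apply, smul_eq_mul, norm_mul, mul_pow, hnorm, ← mul_sum, ← hσdef]
    exact inv_mul_cancel₀ hσ.ne'

end Khinchine

section KhinchineConst

lemma inv_pow_add_inv_pow_le_khinchineConst {k : ℕ} (hk : k ≠ 0) {a b : ℝ} (ha : 0 < a)
    (hb : 0 < b) (hua : 3 - √3 ≤ a ^ k) (hvb : 3 + √3 ≤ b ^ k) :
    (a ^ (k + 1))⁻¹ + (b ^ (k + 1))⁻¹ ≤ khinchineConst (1 - 1 / k) := by
  have hk0 : (k : ℝ) ≠ 0 := Nat.cast_ne_zero.mpr hk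
  have hpow {x y : ℝ} (hx : 0 < x) (hy : 0 < y) (hyx : y ≤ x ^ k) :
      (x ^ (k + 1))⁻¹ ≤ y ^ (1 - 1 / k - 2 : ℝ) := by
    have hexp : (k : ℝ) * (1 - 1 / k - 2) = -(k + 1 : ℕ) := by
      push_cast
      field_simp
      ring
    calc (x ^ (k + 1))⁻¹ = (x ^ k) ^ (1 - 1 / k - 2 : ℝ) := by
          rw [← Real.rpow_natCast_mul hx.le, hexp, Real.rpow_neg hx.le, Real.rpow_natCast]
      _ ≤ y ^ (1 - 1 / k - 2 : ℝ) := by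
          refine Real.rpow_le_rpow_of_nonpos hy hyx ?_
          have : 0 < 1 / (k : ℝ) := by positivity
          linarith
  have h3 := sqrt_three_mem_Ioo.2
  exact add_le_add (hpow ha (by linarith) hua) (hpow hb (by positivity) hvb)

lemma two_rpow_neg_div_le_of_one_le_pow_mul_two_pow {x : ℝ} (hx : 0 ≤ x) {a b : ℕ} (hb : b ≠ 0)
    (h : 1 ≤ x ^ b * 2 ^ a) : (2 : ℝ) ^ (-(a / b : ℝ)) ≤ x := by
  have hb0 : (b : ℝ) ≠ 0 := Nat.cast_ne_zero.mpr hb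
  refine le_of_pow_le_pow_left₀ hb hx ?_
  rw [← Real.rpow_mul_natCast zero_le_two, neg_mul, div_mul_cancel₀ _ hb0,
    Real.rpow_neg zero_le_two, Real.rpow_natCast]
  exact (inv_le_iff_one_le_mul₀ (by positivity)).mpr h

lemma two_rpow_le_khinchineConst_one_half :
    (2 : ℝ) ^ (-(23 / 70) : ℝ) ≤ khinchineConst (1 - 1 / (2 : ℕ)) := by
  obtain ⟨h3, h3'⟩ := sqrt_three_mem_Ioo
  calc (2 : ℝ) ^ (-(23 / 70) : ℝ) ≤ 0.797 := by
        exact_mod_cast two_rpow_neg_div_le_of_one_le_pow_mul_two_pow (a := 23) (b := 70)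
          (by norm_num) (by norm_num) (by norm_num)
    _ ≤ (1.1261 ^ (2 + 1))⁻¹ + (2.1754 ^ (2 + 1))⁻¹ := by norm_num
    _ ≤ khinchineConst (1 - 1 / (2 : ℕ)) :=
        inv_pow_add_inv_pow_le_khinchineConst (by norm_num) (by norm_num) (by norm_num)
          (by norm_num; linarith) (by norm_num; linarith)

lemma two_rpow_le_khinchineConst_two_thirds :
    (2 : ℝ) ^ (-(8 / 35) : ℝ) ≤ khinchineConst (1 - 1 / (3 : ℕ)) := by
  obtain ⟨h3, h3'⟩ := sqrt_three_mem_Ioo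
  calc (2 : ℝ) ^ (-(8 / 35) : ℝ) ≤ 0.854 := by
        exact_mod_cast two_rpow_neg_div_le_of_one_le_pow_mul_two_pow (a := 8) (b := 35)
          (by norm_num) (by norm_num) (by norm_num)
    _ ≤ (1.0824 ^ (3 + 1))⁻¹ + (1.6789 ^ (3 + 1))⁻¹ := by norm_num
    _ ≤ khinchineConst (1 - 1 / (3 : ℕ)) :=
        inv_pow_add_inv_pow_le_khinchineConst (by norm_num) (by norm_num) (by norm_num)
          (by norm_num; linarith) (by norm_num; linarith)

lemma two_rpow_le_khinchineConst_one_sub {θ : ℝ} (hθ : 0 ≤ θ) :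
    (2 : ℝ) ^ (-(0.749 * θ)) ≤ khinchineConst (1 - θ) := by
  obtain ⟨h3, h3'⟩ := sqrt_three_mem_Ioo
  have hsq : √3 ^ 2 = 3 := Real.sq_sqrt (by norm_num)
  have hu : 0 < 3 - √3 := by linarith
  have hv : 0 < 3 + √3 := by linarith
  have hnode {y : ℝ} (hy : 0 < y) {a b : ℕ} (hb : b ≠ 0) (h : y ^ b ≤ 2 ^ a) :
      (2 : ℝ) ^ (-(a / b * θ)) ≤ y ^ (-θ) := by
    have hinv : (2 : ℝ) ^ (-(a / b : ℝ)) ≤ y⁻¹ := by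
      refine two_rpow_neg_div_le_of_one_le_pow_mul_two_pow (inv_nonneg.mpr hy.le) hb ?_
      rwa [inv_pow, inv_mul_eq_div, one_le_div (by positivity)]
    rw [← neg_mul, Real.rpow_mul zero_le_two, Real.rpow_neg_eq_inv_rpow y]
    exact Real.rpow_le_rpow (by positivity) hinv hθ
  -- Weighted AM-GM: `khinchineConst (1 - θ)` is the mean of `(3 ∓ √3) ^ (-θ)` with weights
  -- `(3 ± √3) / 6`, because `(3 - √3) * (3 + √3) = 6`.
  calc (2 : ℝ) ^ (-(0.749 * θ))
      ≤ 2 ^ (-((9 / 26 : ℝ) * θ) * ((3 + √3) / 6) + -((9 / 4 : ℝ) * θ) * ((3 - √3) / 6)) := by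
        refine Real.rpow_le_rpow_of_exponent_le one_le_two ?_
        nlinarith
    _ = (2 ^ (-((9 / 26 : ℝ) * θ))) ^ ((3 + √3) / 6) *
          (2 ^ (-((9 / 4 : ℝ) * θ))) ^ ((3 - √3) / 6) := by
        rw [Real.rpow_add two_pos, Real.rpow_mul zero_le_two, Real.rpow_mul zero_le_two]
    _ ≤ (3 + √3) / 6 * 2 ^ (-((9 / 26 : ℝ) * θ)) + (3 - √3) / 6 * 2 ^ (-((9 / 4 : ℝ) * θ)) :=
        Real.geom_mean_le_arith_mean2_weighted (by positivity) (by positivity) (by positivity)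
          (by positivity) (by ring)
    _ ≤ (3 + √3) / 6 * (3 - √3) ^ (-θ) + (3 - √3) / 6 * (3 + √3) ^ (-θ) := by
        gcongr
        · exact_mod_cast hnode hu (a := 9) (b := 26) (by norm_num)
            ((pow_le_pow_left₀ hu.le (by linarith : 3 - √3 ≤ 1.27) 26).trans (by norm_num))
        · exact_mod_cast hnode hv (a := 9) (b := 4) (by norm_num)
            ((pow_le_pow_left₀ hv.le (by linarith : 3 + √3 ≤ 4.75) 4).trans (by norm_num))
    _ = khinchineConst (1 - θ) := by
        have hfactor {y z : ℝ} (hy : 0 < y) (hyz : z * y = 6) :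
            z / 6 * y ^ (-θ) = y ^ (1 - θ - 2) := by
          have hz : z / 6 = y ^ (-1 : ℝ) := by
            rw [Real.rpow_neg_one, ← hyz, div_mul_cancel_left₀ (by rintro rfl; simp at hyz)]
          rw [hz, ← Real.rpow_add hy]
          ring_nf
        rw [khinchineConst, hfactor hu (by linear_combination -hsq),
          hfactor hv (by linear_combination -hsq)]

end KhinchineConst

section MixedNorm

open scoped NNReal

lemma sum_prod_rpow_le_prod_sum_rpow {ι κ : Type*} [Fintype ι] [Fintype κ] {w : κ → ℝ}
    (hw : ∀ k, 0 ≤ w k) (hw1 : ∑ k, w k = 1) (F : κ → ι → ℝ≥0) :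
    ∑ x, ∏ k, F k x ^ w k ≤ ∏ k, (∑ x, F k x) ^ w k := by
  let _ : MeasurableSpace ι := ⊤
  have h := ENNReal.lintegral_prod_norm_pow_le (μ := MeasureTheory.Measure.count) univ
    (f := fun k x => (F k x : ENNReal)) (fun k _ => (measurable_of_finite _).aemeasurable) hw1
    (fun k _ => hw k)
  simp only [MeasureTheory.lintegral_count, tsum_fintype,
    ← ENNReal.coe_rpow_of_nonneg _ (hw _), ← ENNReal.ofNNReal_finsetProd,
    ← ENNReal.ofNNReal_finsetSum, ENNReal.coe_le_coe] at h
  exact h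

lemma Lp_sum_le_sum_Lp {ι κ : Type*} [Fintype ι] (s : Finset κ) {r : ℝ} (hr : 1 ≤ r)
    (f : κ → ι → ℝ≥0) :
    (∑ x, (∑ b ∈ s, f b x) ^ r) ^ r⁻¹ ≤ ∑ b ∈ s, (∑ x, f b x ^ r) ^ r⁻¹ := by
  have hr0 : 0 < r := by linarith
  have h := le_sum_of_subadditive (fun v : ι → ℝ≥0 => (∑ x, v x ^ r) ^ r⁻¹)
    (by simp [hr0.ne']) (fun v w => by simpa using NNReal.Lp_add_le univ v w hr) s f
  simpa only [Finset.sum_apply] using h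

lemma Lr_Lp_le_Lp_Lr {ι κ : Type*} [Fintype ι] [Fintype κ] {p r : ℝ} (hp : 0 < p) (hpr : p ≤ r)
    (f : ι → κ → ℝ≥0) :
    (∑ x, ((∑ b, f x b ^ p) ^ p⁻¹) ^ r) ^ r⁻¹ ≤ (∑ b, (∑ x, f x b ^ r) ^ (p / r)) ^ p⁻¹ := by
  have : 0 < r := hp.trans_le hpr
  have h := NNReal.rpow_le_rpow (Lp_sum_le_sum_Lp univ ((one_le_div hp).mpr hpr)
    fun b x => f x b ^ p) (inv_nonneg.mpr hp.le)
  simpa only [← NNReal.rpow_mul, inv_div, mul_div_cancel₀ r hp.ne', div_mul_comm, inv_mul_eq_div,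
    mul_one, div_mul_eq_mul_div, mul_inv_cancel₀ hp.ne', one_div] using h

variable {ι : Type*} [Fintype ι]

/-- The mixed norm `‖⋯‖f‖_{e (m-1)}⋯‖_{e 0}` of a finite array `f` with `m` indices: the
`ℓ^{e j}`-norm is taken in the `j`-th index, the last index being summed first. -/
noncomputable def mixedNorm : {m : ℕ} → (Fin m → ℝ) → ((Fin m → ι) → ℝ≥0) → ℝ≥0
  | 0, _, f => f Fin.elim0
  | _ + 1, e, f => (∑ x, mixedNorm (Fin.tail e) (fun b => f (Fin.cons x b)) ^ e 0) ^ (e 0)⁻¹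

lemma mixedNorm_le_prod_rpow {κ : Type*} [Fintype κ] {w : κ → ℝ} (hw : ∀ k, 0 ≤ w k)
    (hw1 : ∑ k, w k = 1) {m : ℕ} {e : Fin m → ℝ} (he : ∀ j, 0 < e j) {E : κ → Fin m → ℝ}
    (hE : ∀ k j, 0 < E k j) (h : ∀ j, (e j)⁻¹ = ∑ k, w k * (E k j)⁻¹) (f : (Fin m → ι) → ℝ≥0) :
    mixedNorm e f ≤ ∏ k, mixedNorm (E k) f ^ w k := by
  induction m with
  | zero =>
    refine le_of_eq (NNReal.coe_injective ?_)
    simp only [mixedNorm, NNReal.coe_prod, NNReal.coe_rpow]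
    rw [← Real.rpow_sum_of_nonneg (NNReal.coe_nonneg _) fun k _ => hw k, hw1, Real.rpow_one]
  | succ m ih =>
    set A : κ → ι → ℝ≥0 := fun k x => mixedNorm (Fin.tail (E k)) fun b => f (Fin.cons x b)
    have hslice (x : ι) : mixedNorm (Fin.tail e) (fun b => f (Fin.cons x b)) ^ e 0 ≤
        ∏ k, (A k x ^ E k 0) ^ (w k * (E k 0)⁻¹ * e 0) := by
      calc mixedNorm (Fin.tail e) (fun b => f (Fin.cons x b)) ^ e 0
          ≤ (∏ k, A k x ^ w k) ^ e 0 :=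
            NNReal.rpow_le_rpow (ih (fun j => he _) (fun k j => hE k _) (fun j => h _) _) (he 0).le
        _ = ∏ k, (A k x ^ E k 0) ^ (w k * (E k 0)⁻¹ * e 0) := by
            rw [← NNReal.finsetProd_rpow]
            refine prod_congr rfl fun k _ => ?_
            rw [← NNReal.rpow_mul, ← NNReal.rpow_mul]
            congr 1
            have := (hE k 0).ne'
            field_simp
    have hweights : ∑ k, w k * (E k 0)⁻¹ * e 0 = 1 := by
      rw [← sum_mul, ← h 0, inv_mul_cancel₀ (he 0).ne']
    calc mixedNorm e f
        ≤ (∏ k, (∑ x, A k x ^ E k 0) ^ (w k * (E k 0)⁻¹ * e 0)) ^ (e 0)⁻¹ := by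
          refine NNReal.rpow_le_rpow ((sum_le_sum fun x _ => hslice x).trans ?_)
            (inv_nonneg.mpr (he 0).le)
          exact sum_prod_rpow_le_prod_sum_rpow (fun k => mul_nonneg (mul_nonneg (hw k)
            (inv_nonneg.mpr (hE k 0).le)) (he 0).le) hweights _
      _ = ∏ k, mixedNorm (E k) f ^ w k := by
          rw [← NNReal.finsetProd_rpow]
          refine prod_congr rfl fun k _ => ?_
          rw [mixedNorm, ← NNReal.rpow_mul, ← NNReal.rpow_mul]
          congr 1
          have := (he 0).ne'
          field_simp

lemma sum_fin_cons {M : Type*} [AddCommMonoid M] {m : ℕ} (g : (Fin (m + 1) → ι) → M) :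
    ∑ i, g i = ∑ x, ∑ b : Fin m → ι, g (Fin.cons x b) := by
  rw [← (Fin.consEquiv fun _ => ι).sum_comp, Fintype.sum_prod_type]
  rfl

lemma mixedNorm_const {p : ℝ} (hp : p ≠ 0) {m : ℕ} (f : (Fin m → ι) → ℝ≥0) :
    mixedNorm (fun _ => p) f = (∑ i, f i ^ p) ^ p⁻¹ := by
  induction m with
  | zero => simp [mixedNorm, NNReal.rpow_rpow_inv hp, Subsingleton.elim _ Fin.elim0]
  | succ m ih =>
    have htail : Fin.tail (fun _ : Fin (m + 1) => p) = fun _ => p := rfl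
    simp only [mixedNorm, htail, ih, NNReal.rpow_inv_rpow hp, sum_fin_cons]

lemma mixedNorm_update_zero_le {p r : ℝ} (hp : 0 < p) (hpr : p ≤ r) {m : ℕ}
    (f : (Fin (m + 1) → ι) → ℝ≥0) :
    mixedNorm (Function.update (fun _ => p) 0 r) f ≤
      (∑ b : Fin m → ι, (∑ x, f (Fin.cons x b) ^ r) ^ (p / r)) ^ p⁻¹ := by
  have htail : Fin.tail (Function.update (fun _ : Fin (m + 1) => p) 0 r) = fun _ => p :=
    Fin.tail_update_zero _ _
  simp only [mixedNorm, htail, Function.update_self, mixedNorm_const hp.ne']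
  exact Lr_Lp_le_Lp_Lr hp hpr fun x b => f (Fin.cons x b)

lemma mixedNorm_update_le {p r : ℝ} (hp : 0 < p) (hpr : p ≤ r) {m : ℕ} (k : Fin (m + 1))
    (f : (Fin (m + 1) → ι) → ℝ≥0) :
    mixedNorm (Function.update (fun _ => p) k r) f ≤
      (∑ b : Fin m → ι, (∑ x, f (k.insertNth x b) ^ r) ^ (p / r)) ^ p⁻¹ := by
  induction m with
  | zero =>
    obtain rfl := Fin.fin_one_eq_zero k
    simpa only [Fin.insertNth_zero'] using mixedNorm_update_zero_le hp hpr f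
  | succ m ih =>
    cases k using Fin.cases with
    | zero => simpa only [Fin.insertNth_zero'] using mixedNorm_update_zero_le hp hpr f
    | succ k =>
      have htail : Fin.tail (Function.update (fun _ : Fin (m + 2) => p) k.succ r) =
          Function.update (fun _ => p) k r := Fin.tail_update_succ _ _ _
      have hhead : Function.update (fun _ : Fin (m + 2) => p) k.succ r 0 = p :=
        Function.update_of_ne (Fin.succ_ne_zero k).symm _ _
      rw [mixedNorm, htail, hhead, sum_fin_cons]
      refine NNReal.rpow_le_rpow (sum_le_sum fun y _ => ?_) (inv_nonneg.mpr hp.le)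
      rw [← NNReal.le_rpow_inv_iff hp]
      simpa only [Fin.insertNth_succ_cons] using ih k fun b => f (Fin.cons y b)

lemma rpow_sum_rpow_le_of_forall_insertNth_le {m : ℕ} {p q r : ℝ} (hp : 0 < p) (hpr : p ≤ r)
    (hq : 0 < q) (hpqr : (m + 1) * q⁻¹ = m * p⁻¹ + r⁻¹) (f : (Fin (m + 1) → ι) → ℝ≥0) {M : ℝ≥0}
    (h : ∀ k : Fin (m + 1), ∑ b : Fin m → ι, (∑ x, f (k.insertNth x b) ^ r) ^ (p / r) ≤ M) :
    (∑ i, f i ^ q) ^ q⁻¹ ≤ M ^ p⁻¹ := by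
  have hE (k j : Fin (m + 1)) : 0 < Function.update (fun _ => p) k r j := by
    rw [Function.update_apply]
    split_ifs <;> linarith
  have hexp (j : Fin (m + 1)) : q⁻¹ =
      ∑ k : Fin (m + 1), ((m : ℝ) + 1)⁻¹ * (Function.update (fun _ => p) k r j)⁻¹ := by
    have hinv (k : Fin (m + 1)) : (Function.update (fun _ => p) k r j)⁻¹ =
        p⁻¹ + if k = j then r⁻¹ - p⁻¹ else 0 := by
      rw [Function.update_apply]
      split_ifs with h h' h' <;> simp_all
    simp only [hinv, ← mul_sum, sum_add_distrib, sum_ite_eq', sum_const, mem_univ, if_true,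
      card_univ, Fintype.card_fin, nsmul_eq_mul]
    push_cast
    rw [eq_inv_mul_iff_mul_eq₀ (by positivity), hpqr]
    ring
  have hweights : ∑ _k : Fin (m + 1), ((m : ℝ) + 1)⁻¹ = 1 := by
    rw [sum_const, card_univ, Fintype.card_fin, nsmul_eq_mul, Nat.cast_add_one,
      mul_inv_cancel₀ (by positivity)]
  calc (∑ i, f i ^ q) ^ q⁻¹ = mixedNorm (fun _ => q) f := (mixedNorm_const hq.ne' f).symm
    _ ≤ ∏ k : Fin (m + 1), mixedNorm (Function.update (fun _ => p) k r) f ^ ((m : ℝ) + 1)⁻¹ :=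
        mixedNorm_le_prod_rpow (fun _ => by positivity) hweights (fun _ => hq) hE hexp f
    _ ≤ ∏ _k : Fin (m + 1), (M ^ p⁻¹) ^ ((m : ℝ) + 1)⁻¹ :=
        prod_le_prod' fun k _ => NNReal.rpow_le_rpow ((mixedNorm_update_le hp hpr k f).trans
          (NNReal.rpow_le_rpow (h k) (by positivity))) (by positivity)
    _ = M ^ p⁻¹ := by
        rw [prod_const, card_univ, Fintype.card_fin, ← NNReal.rpow_mul_natCast, Nat.cast_add_one,
          inv_mul_cancel₀ (by positivity), NNReal.rpow_one]

end MixedNorm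

section Recursion

open scoped NNReal

variable {m N : ℕ}

lemma pi_single_insertNth {ι R : Type*} [DecidableEq ι] [Zero R] (c : R) (k : Fin (m + 1)) (x : ι)
    (b : Fin m → ι) :
    (fun j => Pi.single (k.insertNth (α := fun _ => ι) x b j) c : Fin (m + 1) → ι → R) =
      k.insertNth (Pi.single x c) fun j => Pi.single (b j) c := by
  funext j
  cases j using Fin.succAboveCases k <;> simp

lemma steinhausSum_insertNth {q : ℕ} [NeZero q]
    (U : ContinuousMultilinearMap ℂ (fun _ : Fin (m + 1) => Fin N → ℂ) ℂ) (k : Fin (m + 1))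
    (b : Fin m → Fin N) (ε : Fin N → ZMod q) :
    steinhausSum (fun x => U fun j => Pi.single (k.insertNth (α := fun _ => Fin N) x b j) 1) ε =
      U.curryMid k (fun x => ZMod.stdAddChar (ε x)) fun j => Pi.single (b j) 1 := by
  conv_rhs => rw [pi_eq_sum_univ' fun x => (ZMod.stdAddChar (ε x) : ℂ), map_sum]
  simp only [steinhausSum, map_smul, _root_.sum_apply,
    _root_.smul_apply, ContinuousMultilinearMap.curryMid_apply,
    pi_single_insertNth, smul_eq_mul, mul_comm]

lemma norm_curryMid_stdAddChar_le {q : ℕ} [NeZero q]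
    (U : ContinuousMultilinearMap ℂ (fun _ : Fin (m + 1) => Fin N → ℂ) ℂ) (k : Fin (m + 1))
    (ε : Fin N → ZMod q) : ‖U.curryMid k fun x => ZMod.stdAddChar (ε x)‖ ≤ ‖U‖ := by
  have hz : ‖fun x => ZMod.stdAddChar (ε x)‖ ≤ 1 :=
    (pi_norm_le_iff_of_nonneg zero_le_one).mpr fun x => (AddChar.norm_apply _ _).le
  simpa only [ContinuousMultilinearMap.norm_curryMid] using (U.curryMid k).unit_le_opNorm _ hz

lemma sub_one_rpow_mul_two_rpow_div_le {x β c : ℝ} (hx : 1 ≤ x) (hβ : 0 ≤ β)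
    (hc : c * log 2 ≤ β) : (x - 1) ^ β * 2 ^ (c / x) ≤ x ^ β := by
  have hx0 : 0 < x := by linarith
  have hbase : x - 1 ≤ x * exp (-(1 / x)) := by
    have h := mul_le_mul_of_nonneg_left (Real.one_sub_le_exp_neg (1 / x)) hx0.le
    rwa [mul_sub, mul_one_div_cancel hx0.ne', mul_one] at h
  calc (x - 1) ^ β * 2 ^ (c / x)
      ≤ (x * exp (-(1 / x))) ^ β * exp (β / x) := by
        rw [Real.rpow_def_of_pos two_pos]
        gcongr
        rw [← mul_div_assoc, mul_comm]
        gcongr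
    _ = x ^ β := by
        have hexp : -(1 / x) * β + β / x = 0 := by ring
        rw [Real.mul_rpow hx0.le (exp_pos _).le, ← Real.exp_mul, mul_assoc, ← Real.exp_add, hexp,
          Real.exp_zero, mul_one]

/-- The Bohnenblust--Hille inequality for complex `n`-linear forms holds with constant `C`. -/
def BohnenblustHille (n : ℕ) (C : ℝ) : Prop :=
  ∀ (N : ℕ) (U : ContinuousMultilinearMap ℂ (fun _ : Fin n => Fin N → ℂ) ℂ),
    BHcomplex n N U ≤ C * ‖U‖

namespace BohnenblustHille

variable {C C' : ℝ}

lemma mono (h : BohnenblustHille m C) (hC : C ≤ C') : BohnenblustHille m C' := fun N U =>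
  (h N U).trans (mul_le_mul_of_nonneg_right hC (norm_nonneg U))

lemma sum_rpow_le (h : BohnenblustHille m C) (hm : 0 < m)
    (U : ContinuousMultilinearMap ℂ (fun _ : Fin m => Fin N → ℂ) ℂ) {M : ℝ} (hM : C * ‖U‖ ≤ M) :
    ∑ i : Fin m → Fin N, ‖U fun k => Pi.single (i k) 1‖ ^ (2 * m / (m + 1) : ℝ) ≤
      M ^ (2 * m / (m + 1) : ℝ) := by
  have : (0 : ℝ) < m := Nat.cast_pos.mpr hm
  have hBH := (h N U).trans hM
  rw [BHcomplex, ← inv_div (2 * m : ℝ)] at hBH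
  have hsum : 0 ≤ ∑ i : Fin m → Fin N, ‖U fun k => Pi.single (i k) 1‖ ^ (2 * m / (m + 1) : ℝ) := by
    positivity
  exact (Real.rpow_inv_le_iff_of_pos hsum ((Real.rpow_nonneg hsum _).trans hBH)
    (by positivity)).mp hBH

lemma khinchineConst_mul_sum_insertNth_le (h : BohnenblustHille m C) (hC : 0 ≤ C) (hm : 0 < m)
    (U : ContinuousMultilinearMap ℂ (fun _ : Fin (m + 1) => Fin N → ℂ) ℂ) (k : Fin (m + 1)) :
    khinchineConst (m / (m + 1)) * ∑ b : Fin m → Fin N,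
        (∑ x, ‖U fun j => Pi.single (k.insertNth (α := fun _ => Fin N) x b j) 1‖ ^ 2) ^
          (m / (m + 1) : ℝ) ≤
      (C * ‖U‖) ^ (2 * m / (m + 1) : ℝ) := by
  have : (0 : ℝ) < m := Nat.cast_pos.mpr hm
  have hs : (m / (m + 1) : ℝ) ∈ Set.Ioo 0 1 :=
    ⟨by positivity, (div_lt_one (by positivity)).mpr (lt_add_one _)⟩
  calc _ ≤ ∑ b : Fin m → Fin N, 𝔼 ε : Fin N → ZMod 5, (‖steinhausSum (fun x =>
          U fun j => Pi.single (k.insertNth (α := fun _ => Fin N) x b j) 1) ε‖ ^ 2) ^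
            (m / (m + 1) : ℝ) := by
        rw [mul_sum]
        exact sum_le_sum fun b _ => khinchine (by norm_num) _ hs
    _ = 𝔼 ε : Fin N → ZMod 5, ∑ b : Fin m → Fin N,
          ‖U.curryMid k (fun x => ZMod.stdAddChar (ε x)) fun j => Pi.single (b j) 1‖ ^
            (2 * m / (m + 1) : ℝ) := by
        simp only [steinhausSum_insertNth, ← Real.rpow_natCast_mul (norm_nonneg _), Nat.cast_ofNat,
          mul_div_assoc, expect_sum_comm]
    _ ≤ (C * ‖U‖) ^ (2 * m / (m + 1) : ℝ) :=
        expect_le univ_nonempty fun ε _ => h.sum_rpow_le hm _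
          (mul_le_mul_of_nonneg_left (norm_curryMid_stdAddChar_le U k ε) hC)

lemma succ (h : BohnenblustHille m C) (hC : 0 ≤ C) (hm : 0 < m) :
    BohnenblustHille (m + 1)
      (C * (khinchineConst (m / (m + 1)))⁻¹ ^ ((m + 1) / (2 * m) : ℝ)) := by
  intro N U
  have : (0 : ℝ) < m := Nat.cast_pos.mpr hm
  have hK : 0 < khinchineConst (m / (m + 1)) := khinchineConst_pos _
  set K := khinchineConst (m / (m + 1))
  set R : ℝ≥0 := ⟨K⁻¹ * (C * ‖U‖) ^ (2 * m / (m + 1) : ℝ), by positivity⟩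
  set p : ℝ := 2 * m / (m + 1) with hp
  have hp2 : p / 2 = m / (m + 1) := by ring
  have hslice (k : Fin (m + 1)) : ∑ b : Fin m → Fin N,
      (∑ x, ‖U fun j => Pi.single (k.insertNth (α := fun _ => Fin N) x b j) 1‖₊ ^ (2 : ℝ)) ^
        (p / 2) ≤ R := by
    rw [← NNReal.coe_le_coe, hp2]
    push_cast
    simp only [Real.rpow_two]
    exact (le_inv_mul_iff₀ hK).mpr (h.khinchineConst_mul_sum_insertNth_le hC hm U k)
  have hBlei := rpow_sum_rpow_le_of_forall_insertNth_le (m := m) (p := p) (r := 2)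
    (q := 2 * (m + 1) / (m + 1 + 1)) (by positivity)
    ((div_le_iff₀ (by positivity)).mpr (by linarith)) (by positivity)
    (by rw [hp]; field_simp)
    (fun i : Fin (m + 1) → Fin N => ‖U fun j => Pi.single (i j) 1‖₊) hslice
  rw [← NNReal.coe_le_coe] at hBlei
  push_cast at hBlei
  calc BHcomplex (m + 1) N U ≤ (K⁻¹ * (C * ‖U‖) ^ p) ^ p⁻¹ := by
        rw [BHcomplex]
        push_cast
        rw [← inv_div (2 * (m + 1) : ℝ)]
        exact hBlei
    _ = C * K⁻¹ ^ ((m + 1) / (2 * m) : ℝ) * ‖U‖ := by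
        rw [Real.mul_rpow (by positivity) (by positivity),
          Real.rpow_rpow_inv (by positivity) (by positivity), hp, inv_div]
        ring

lemma succ_of_two_rpow_neg_le (h : BohnenblustHille m C) (hC : 0 ≤ C) (hm : 0 < m) {y : ℝ}
    (hy : 2 ^ (-y) ≤ khinchineConst (1 - 1 / (m + 1 : ℕ))) :
    BohnenblustHille (m + 1) (C * 2 ^ (y * ((m + 1) / (2 * m)))) := by
  have hs : (1 - 1 / (m + 1 : ℕ) : ℝ) = m / (m + 1) := by
    push_cast
    field_simp
    ring
  rw [hs] at hy
  refine (h.succ hC hm).mono ?_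
  rw [Real.rpow_mul zero_le_two]
  gcongr
  · exact inv_nonneg.mpr (khinchineConst_pos _).le
  · rwa [inv_le_comm₀ (khinchineConst_pos _) (by positivity), ← Real.rpow_neg zero_le_two]

lemma succ_mul_two_rpow (h : BohnenblustHille m C) (hC : 0 ≤ C) (hm : 0 < m) :
    BohnenblustHille (m + 1) (C * 2 ^ (0.3745 / m : ℝ)) := by
  have : (0 : ℝ) < m := Nat.cast_pos.mpr hm
  convert! h.succ_of_two_rpow_neg_le hC hm
    (two_rpow_le_khinchineConst_one_sub (θ := 1 / (m + 1 : ℕ)) (by positivity)) using 3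
  push_cast
  field_simp
  norm_num

lemma succ_mul_rpow {A β : ℝ} (h : BohnenblustHille m (A * ((m : ℝ) - 1) ^ β)) (hm : 0 < m)
    (hA : 0 ≤ A) (hβ : 0.3745 * log 2 ≤ β) : BohnenblustHille (m + 1) (A * (m : ℝ) ^ β) := by
  have hm1 : (1 : ℝ) ≤ m := Nat.one_le_cast.mpr hm
  have : (0 : ℝ) ≤ m - 1 := sub_nonneg.mpr hm1
  refine (h.succ_mul_two_rpow (by positivity) hm).mono ?_
  rw [mul_assoc]
  exact mul_le_mul_of_nonneg_left
    (sub_one_rpow_mul_two_rpow_div_le hm1 ((by positivity : 0 ≤ 0.3745 * log 2).trans hβ) hβ) hA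

end BohnenblustHille

lemma sum_norm_apply_single_le {ι : Type*} [Fintype ι] [DecidableEq ι] (f : (ι → ℂ) →L[ℂ] ℂ) :
    ∑ i, ‖f (Pi.single i 1)‖ ≤ ‖f‖ := by
  set z : ι → ℂ := fun i => (starRingEnd ℂ) (f (Pi.single i 1)) / ‖f (Pi.single i 1)‖ with hz
  have hz1 : ‖z‖ ≤ 1 := (pi_norm_le_iff_of_nonneg zero_le_one).mpr fun i => by
    simpa only [hz, norm_div, RCLike.norm_conj, Complex.norm_real, norm_norm] using
      div_self_le_one _
  have hterm (i : ι) : z i * f (Pi.single i 1) = ‖f (Pi.single i 1)‖ := by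
    rw [hz, div_mul_eq_mul_div, Complex.conj_mul', sq, mul_self_div_self]
  have hfz : f z = (∑ i, ‖f (Pi.single i 1)‖ : ℝ) := by
    rw [pi_eq_sum_univ' z, map_sum, Complex.ofReal_sum]
    simp only [map_smul, smul_eq_mul, hterm]
  calc ∑ i, ‖f (Pi.single i 1)‖ = ‖f z‖ := by
        rw [hfz, Complex.norm_of_nonneg (by positivity)]
    _ ≤ ‖f‖ := f.unit_le_opNorm z hz1

lemma bohnenblustHille_one : BohnenblustHille 1 1 := fun N U => by
  obtain ⟨f, rfl⟩ :=
    (ContinuousMultilinearMap.ofSubsingleton ℂ (Fin N → ℂ) ℂ (0 : Fin 1)).surjective U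
  have hexp : (2 * (1 : ℕ) / ((1 : ℕ) + 1) : ℝ) = 1 := by norm_num
  have hexp' : (((1 : ℕ) + 1) / (2 * (1 : ℕ)) : ℝ) = 1 := by norm_num
  simp only [BHcomplex, hexp, hexp', Real.rpow_one, one_mul,
    ContinuousMultilinearMap.norm_ofSubsingleton,
    ContinuousMultilinearMap.ofSubsingleton_apply_apply]
  exact ((Equiv.funUnique (Fin 1) (Fin N)).sum_comp fun i => ‖f (Pi.single i 1)‖).trans_le
    (sum_norm_apply_single_le f)

lemma bohnenblustHille_two : BohnenblustHille 2 (2 ^ (23 / 70 : ℝ)) := by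
  convert! bohnenblustHille_one.succ_of_two_rpow_neg_le zero_le_one one_pos
    two_rpow_le_khinchineConst_one_half using 1
  norm_num

lemma bohnenblustHille_three : BohnenblustHille 3 (2 ^ (1 / 2 : ℝ)) := by
  convert! bohnenblustHille_two.succ_of_two_rpow_neg_le (by positivity) two_pos
    two_rpow_le_khinchineConst_two_thirds using 1
  rw [← Real.rpow_add two_pos]
  norm_num

lemma bohnenblustHille_nine :
    BohnenblustHille 9 (1.02960973695 * (2 ^ 3 : ℝ) ^ (0.304975 : ℝ)) := by
  have hroot : (2 : ℝ) ^ ((24 : ℝ)⁻¹) ≤ 1.02960973695 := by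
    rw [Real.rpow_inv_le_iff_of_pos zero_le_two (by norm_num) (by norm_num)]
    norm_num
  have h4 := bohnenblustHille_three.succ_mul_two_rpow (by positivity) (by norm_num)
  have h5 := h4.succ_mul_two_rpow (by positivity) (by norm_num)
  have h6 := h5.succ_mul_two_rpow (by positivity) (by norm_num)
  have h7 := h6.succ_mul_two_rpow (by positivity) (by norm_num)
  have h8 := h7.succ_mul_two_rpow (by positivity) (by norm_num)
  refine (h8.succ_mul_two_rpow (by positivity) (by norm_num)).mono ?_
  simp only [← Real.rpow_add two_pos]
  calc _ ≤ (2 : ℝ) ^ ((24 : ℝ)⁻¹ + (3 : ℕ) * 0.304975) :=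
        Real.rpow_le_rpow_of_exponent_le one_le_two (by norm_num)
    _ = 2 ^ ((24 : ℝ)⁻¹) * (2 ^ 3 : ℝ) ^ (0.304975 : ℝ) := by
        rw [Real.rpow_add two_pos, Real.rpow_natCast_mul zero_le_two]
    _ ≤ 1.02960973695 * (2 ^ 3 : ℝ) ^ (0.304975 : ℝ) := by gcongr

end Recursion

theorem stmt9 (n : ℕ) (hn : 2 ^ 3 < n) (N : ℕ) (hN : 0 < N)
    (U : ContinuousMultilinearMap ℂ (fun _ : Fin n => (Fin N → ℂ)) ℂ) :
    BHcomplex n N U ≤ 1.02960973695 * ((n : ℝ) - 1) ^ (0.304975 : ℝ) * ‖U‖ := by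
  suffices h : BohnenblustHille n (1.02960973695 * ((n : ℝ) - 1) ^ (0.304975 : ℝ)) from h N U
  clear U
  induction n, hn using Nat.le_induction with
  | base =>
    convert! bohnenblustHille_nine using 3
    norm_num
  | succ n hn ih =>
    rw [Nat.cast_add_one, add_sub_cancel_right]
    exact ih.succ_mul_rpow (by omega) (by norm_num) (by linarith [Real.log_two_lt_d9])
end
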